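/- arXiv:1410.7081 — 2 statements merged into one kernel-verified Lean document; each statement's English description precedes it below -/
import Mathlib

section
/- ∫₀¹ K'(k)/(K(k)·√(1-k²)) dk = 2G, where G = Σ_{n≥0} (-1)ⁿ/(2n+1)² is Catalan's constant. -/
open scoped Real
open MeasureTheory

noncomputable def EllK (k : ℝ) : ℝ :=
  ∫ x in (0:ℝ)..(1:ℝ), 1 / Real.sqrt ((1 - x^2) * (1 - k^2 * x^2))

noncomputable def EllE (k : ℝ) : ℝ :=
  ∫ x in (0:ℝ)..(1:ℝ), Real.sqrt ((1 - k^2 * x^2) / (1 - x^2))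

noncomputable def EllK' (k : ℝ) : ℝ := EllK (Real.sqrt (1 - k^2))


open Set Filter Topology

namespace EllipticRatio

lemma ellK_radicand_pos {c : ℝ} (hc0 : 0 ≤ c) (hc1 : c < 1) {x : ℝ}
    (hx : x ∈ Ioo (0:ℝ) 1) : 0 < (1 - x^2) ∧ 0 < 1 - c^2 * x^2 ∧ 1 - c^2 ≤ 1 - c^2 * x^2 := by
  obtain ⟨h0, h1⟩ := hx
  have h2 : x^2 < 1 := by nlinarith
  have h3 : c^2 < 1 := by nlinarith
  refine ⟨by linarith, by nlinarith [sq_nonneg c, sq_nonneg x], by nlinarith [sq_nonneg c]⟩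

lemma EllK_eq_setIntegral (c : ℝ) :
    EllK c = ∫ x in Ioo (0:ℝ) 1, 1 / √((1 - x^2) * (1 - c^2 * x^2)) := by
  rw [EllK, intervalIntegral.integral_of_le zero_le_one, integral_Ioc_eq_integral_Ioo]

lemma integrableOn_inv_sqrt : IntegrableOn (fun x : ℝ => 1 / √(1 - x^2)) (Ioo 0 1) := by
  refine (intervalIntegral.integrableOn_deriv_of_nonneg (g := Real.arcsin)
    Real.continuous_arcsin.continuousOn (fun x hx => ?_) (fun x _ => by positivity)).mono_set
      Ioo_subset_Ioc_self
  exact Real.hasDerivAt_arcsin (by linarith [hx.1]) hx.2.ne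

lemma integral_inv_sqrt : ∫ x in Ioo (0:ℝ) 1, 1 / √(1 - x^2) = π / 2 := by
  rw [← integral_Ioc_eq_integral_Ioo, ← intervalIntegral.integral_of_le zero_le_one,
    intervalIntegral.integral_eq_sub_of_hasDerivAt_of_le (f := Real.arcsin) zero_le_one
      Real.continuous_arcsin.continuousOn]
  · simp
  · exact fun x hx => Real.hasDerivAt_arcsin (by linarith [hx.1]) hx.2.ne
  · rw [intervalIntegrable_iff_integrableOn_Ioo_of_le zero_le_one]
    exact integrableOn_inv_sqrt

lemma ellK_integrand_le {c : ℝ} (hc0 : 0 ≤ c) (hc1 : c < 1) {x : ℝ} (hx : x ∈ Ioo (0:ℝ) 1) :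
    1 / √((1 - x^2) * (1 - c^2 * x^2)) ≤ (1 / √(1 - c^2)) * (1 / √(1 - x^2)) := by
  obtain ⟨h1, h2, h3⟩ := ellK_radicand_pos hc0 hc1 hx
  have h4 : 0 < 1 - c^2 := by nlinarith
  rw [one_div_mul_one_div, ← Real.sqrt_mul h4.le]
  apply one_div_le_one_div_of_le (by positivity)
  apply Real.sqrt_le_sqrt
  nlinarith

lemma integrableOn_ellK {c : ℝ} (hc0 : 0 ≤ c) (hc1 : c < 1) :
    IntegrableOn (fun x : ℝ => 1 / √((1 - x^2) * (1 - c^2 * x^2))) (Ioo 0 1) := by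
  refine Integrable.mono' (integrableOn_inv_sqrt.const_mul (1 / √(1 - c^2)))
    (Measurable.aestronglyMeasurable (by fun_prop)) ?_
  filter_upwards [ae_restrict_mem measurableSet_Ioo] with x hx
  rw [Real.norm_of_nonneg (by positivity)]
  exact ellK_integrand_le hc0 hc1 hx

lemma EllK_mono {a b : ℝ} (ha : 0 ≤ a) (hab : a ≤ b) (hb : b < 1) : EllK a ≤ EllK b := by
  rw [EllK_eq_setIntegral, EllK_eq_setIntegral]
  refine setIntegral_mono_on (integrableOn_ellK ha (hab.trans_lt hb))
    (integrableOn_ellK (ha.trans hab) hb) measurableSet_Ioo fun x hx => ?_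
  obtain ⟨h1, h2, _⟩ := ellK_radicand_pos (ha.trans hab) hb hx
  apply one_div_le_one_div_of_le (by positivity)
  apply Real.sqrt_le_sqrt
  have : a^2 ≤ b^2 := by nlinarith
  apply mul_le_mul_of_nonneg_left _ h1.le
  nlinarith [sq_nonneg x]

lemma EllK_zero : EllK 0 = π / 2 := by
  rw [EllK_eq_setIntegral, ← integral_inv_sqrt]
  simp

lemma EllK_ge {c : ℝ} (hc0 : 0 ≤ c) (hc1 : c < 1) : π / 2 ≤ EllK c :=
  EllK_zero ▸ EllK_mono le_rfl hc0 hc1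

lemma EllK_pos {c : ℝ} (hc0 : 0 ≤ c) (hc1 : c < 1) : 0 < EllK c :=
  (by positivity : 0 < π / 2).trans_le (EllK_ge hc0 hc1)

lemma EllK_le {c : ℝ} (hc0 : 0 ≤ c) (hc1 : c < 1) : EllK c ≤ (1 / √(1 - c^2)) * (π / 2) := by
  rw [EllK_eq_setIntegral, ← integral_inv_sqrt, ← integral_const_mul]
  exact setIntegral_mono_on (integrableOn_ellK hc0 hc1)
    (integrableOn_inv_sqrt.const_mul _) measurableSet_Ioo fun x hx => ellK_integrand_le hc0 hc1 hx

/-- The antiderivative that governs the logarithmic growth of `EllK` at `1`. -/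
lemma hasDerivAt_log_sqrt_add {c : ℝ} (hc0 : 0 < c) (hc1 : c < 1) {x : ℝ}
    (hx : x ∈ Ioo (0:ℝ) 1) :
    HasDerivAt (fun x => -(1 / c) * Real.log (c * √(1 - x^2) + √(1 - c^2 * x^2)))
      (x * (1 / √((1 - x^2) * (1 - c^2 * x^2)))) x := by
  obtain ⟨h1, h2, _⟩ := ellK_radicand_pos hc0.le hc1 hx
  have e1 : HasDerivAt (fun x : ℝ => 1 - x^2) (-(2 * x)) x := by
    simpa using (hasDerivAt_pow 2 x).const_sub 1
  have e2 : HasDerivAt (fun x : ℝ => 1 - c^2 * x^2) (-(c^2 * (2 * x))) x := by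
    simpa using ((hasDerivAt_pow 2 x).const_mul (c^2)).const_sub 1
  have s1 : 0 < √(1 - x^2) := Real.sqrt_pos.2 h1
  have s2 : 0 < √(1 - c^2 * x^2) := Real.sqrt_pos.2 h2
  have e := ((((e1.sqrt h1.ne').const_mul c).add (e2.sqrt h2.ne')).log
    (by simp only [Pi.add_apply]; positivity)).const_mul (-(1 / c))
  refine e.congr_deriv ?_
  rw [Real.sqrt_mul h1.le]
  simp only [Pi.add_apply]
  field_simp
  ring

lemma EllK_log_bounds {c : ℝ} (hc0 : 0 < c) (hc1 : c < 1) :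
    (1 / c) * (Real.log (1 + c) - Real.log (1 - c^2) / 2) ≤ EllK c ∧
    EllK c ≤ (1 / c) * (Real.log (1 + c) - Real.log (1 - c^2) / 2) + 1 := by
  have hc2 : 0 < 1 - c^2 := by nlinarith
  have hpos : ∀ x ∈ Icc (0:ℝ) 1, c * √(1 - x^2) + √(1 - c^2 * x^2) ≠ 0 := by
    intro x hx
    have : 0 < 1 - c^2 * x^2 := by nlinarith [mul_nonneg (sq_nonneg c) hx.1, hx.2, hx.1]
    positivity
  have hcont : ContinuousOn
      (fun x => -(1 / c) * Real.log (c * √(1 - x^2) + √(1 - c^2 * x^2))) (Icc 0 1) :=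
    ContinuousOn.mul continuousOn_const (ContinuousOn.log (by fun_prop) hpos)
  have hexp : IntegrableOn (fun x : ℝ => x * (1 / √((1 - x^2) * (1 - c^2 * x^2)))) (Ioo 0 1) :=
    (intervalIntegral.integrableOn_deriv_of_nonneg hcont
      (fun x hx => hasDerivAt_log_sqrt_add hc0 hc1 hx)
      (fun x hx => mul_nonneg hx.1.le (by positivity))).mono_set Ioo_subset_Ioc_self
  have hval : ∫ x in Ioo (0:ℝ) 1, x * (1 / √((1 - x^2) * (1 - c^2 * x^2)))
      = (1 / c) * (Real.log (1 + c) - Real.log (1 - c^2) / 2) := by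
    rw [← integral_Ioc_eq_integral_Ioo, ← intervalIntegral.integral_of_le zero_le_one,
      intervalIntegral.integral_eq_sub_of_hasDerivAt_of_le zero_le_one hcont
        (fun x hx => hasDerivAt_log_sqrt_add hc0 hc1 hx)
        ((intervalIntegrable_iff_integrableOn_Ioo_of_le zero_le_one).2 hexp)]
    simp [Real.log_sqrt hc2.le]
    ring_nf
  rw [← hval, EllK_eq_setIntegral]
  have hK := integrableOn_ellK hc0.le hc1
  constructor
  · refine setIntegral_mono_on hexp hK measurableSet_Ioo fun x hx => ?_
    exact mul_le_of_le_one_left (by positivity) hx.2.le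
  · have h1 : ∫ x in Ioo (0:ℝ) 1, (1:ℝ) = 1 := by simp
    have h1' : IntegrableOn (fun _ : ℝ => (1:ℝ)) (Ioo 0 1) := by simp
    refine le_of_le_of_eq ?_ ((integral_add hexp h1').trans (congrArg _ h1))
    refine setIntegral_mono_on hK (hexp.add h1') measurableSet_Ioo fun x hx => ?_
    obtain ⟨h1, h2, _⟩ := ellK_radicand_pos hc0.le hc1 hx
    have h3 : 1 - x ≤ √((1 - x^2) * (1 - c^2 * x^2)) := by
      apply Real.le_sqrt_of_sq_le
      rw [sq]
      have hx0 := hx.1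
      have hx1 := hx.2
      apply mul_le_mul
      · nlinarith
      · nlinarith
      · linarith
      · exact h1.le
    have h4 : 0 < √((1 - x^2) * (1 - c^2 * x^2)) := by positivity
    have : (1 - x) * (1 / √((1 - x^2) * (1 - c^2 * x^2))) ≤ 1 := by
      rw [mul_one_div, div_le_one h4]; exact h3
    linarith

/-- Gauss's transformation of the complete elliptic integral. -/
lemma EllK_gauss {c : ℝ} (hc0 : 0 < c) (hc1 : c < 1) :
    EllK (2 * √c / (1 + c)) = (1 + c) * EllK c := by
  set f : ℝ → ℝ := fun s => (1 + c) * s / (1 + c * s^2) with hf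
  set f' : ℝ → ℝ := fun s => (1 + c) * (1 - c * s^2) / (1 + c * s^2)^2 with hf'
  have hden : ∀ s : ℝ, 0 < 1 + c * s^2 := fun s => by positivity
  have hder : ∀ s : ℝ, HasDerivAt f (f' s) s := by
    intro s
    have e1 : HasDerivAt (fun s : ℝ => (1 + c) * s) (1 + c) s := by
      simpa using (hasDerivAt_id s).const_mul (1 + c)
    have e2 : HasDerivAt (fun s : ℝ => 1 + c * s^2) (c * (2 * s)) s := by
      simpa using ((hasDerivAt_pow 2 s).const_mul c).const_add 1
    refine (e1.div e2 (hden s).ne').congr_deriv ?_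
    simp only [hf']
    congr 1
    ring
  have hcs : ∀ s ∈ Ioo (0:ℝ) 1, 0 < 1 - c * s^2 := by
    rintro s ⟨h0, h1⟩
    have : s^2 < 1 := by nlinarith
    nlinarith
  have hpos : ∀ s ∈ Ioo (0:ℝ) 1, 0 < f' s := by
    intro s hs
    have := hcs s hs
    have := hden s
    simp only [hf']; positivity
  have hcont : Continuous f := continuous_iff_continuousAt.2 fun s => (hder s).continuousAt
  have hmono : StrictMonoOn f (Icc 0 1) := by
    apply strictMonoOn_of_deriv_pos (convex_Icc 0 1) hcont.continuousOn
    intro s hs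
    rw [interior_Icc] at hs
    rw [(hder s).deriv]
    exact hpos s hs
  have hf0 : f 0 = 0 := by simp [hf]
  have hf1 : f 1 = 1 := by simp only [hf]; field_simp
  have himg : f '' Ioo 0 1 = Ioo 0 1 := by
    apply Subset.antisymm
    · rintro _ ⟨s, hs, rfl⟩
      have hs' : s ∈ Icc (0:ℝ) 1 := Ioo_subset_Icc_self hs
      exact ⟨hf0 ▸ hmono (by simp) hs' hs.1, hf1 ▸ hmono hs' (by simp) hs.2⟩
    · have := intermediate_value_Ioo zero_le_one hcont.continuousOn (a := (0:ℝ)) (b := 1)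
      rwa [hf0, hf1] at this
  rw [EllK_eq_setIntegral, EllK_eq_setIntegral]
  nth_rewrite 1 [← himg]
  rw [integral_image_eq_integral_abs_deriv_smul measurableSet_Ioo
    (fun s _ => (hder s).hasDerivWithinAt) (hmono.mono Ioo_subset_Icc_self).injOn,
    ← integral_const_mul]
  refine setIntegral_congr_fun measurableSet_Ioo fun s hs => ?_
  obtain ⟨h1, h2, _⟩ := ellK_radicand_pos hc0.le hc1 hs
  have h3 := hcs s hs
  have h4 := hden s
  have hsq : √c ^ 2 = c := Real.sq_sqrt hc0.le
  have key : (1 - f s ^ 2) * (1 - (2 * √c / (1 + c))^2 * f s ^ 2)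
      = ((1 - s^2) * (1 - c^2 * s^2)) * ((1 - c * s^2) / (1 + c * s^2)^2)^2 := by
    simp only [hf, div_pow, mul_pow, hsq]
    field_simp
    ring
  simp only [smul_eq_mul]
  rw [abs_of_pos (hpos s hs), key, Real.sqrt_mul (by positivity), Real.sqrt_sq (by positivity)]
  have h5 : 0 < √((1 - s^2) * (1 - c^2 * s^2)) := by positivity
  simp only [hf']
  field_simp

end EllipticRatio

namespace EllipticRatio

section Theta

variable {𝕜 : Type*} [NormedField 𝕜]

/-- The theta series `∑ z ^ (n ^ 2)` over the integers. -/
noncomputable def theta (z : 𝕜) : 𝕜 := ∑' n : ℤ, z ^ (n.natAbs ^ 2)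

lemma summable_pow_natAbs {r : ℝ} (h0 : 0 ≤ r) (h1 : r < 1) :
    Summable (fun n : ℤ => r ^ n.natAbs) := by
  have := summable_geometric_of_lt_one h0 h1
  exact Summable.of_nat_of_neg (by simpa using this) (by simpa using this)

lemma summable_norm_theta {z : 𝕜} (hz : ‖z‖ < 1) :
    Summable (fun n : ℤ => ‖z ^ (n.natAbs ^ 2)‖) := by
  refine Summable.of_nonneg_of_le (fun _ => norm_nonneg _) (fun n => ?_)
    (summable_pow_natAbs (norm_nonneg z) hz)
  rw [norm_pow]
  exact pow_le_pow_of_le_one (norm_nonneg z) hz.le (Nat.le_self_pow two_ne_zero _)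

lemma hasSum_theta [CompleteSpace 𝕜] {z : 𝕜} (hz : ‖z‖ < 1) : HasSum (fun n : ℤ => z ^ (n.natAbs ^ 2)) (theta z) :=
  (summable_norm_theta hz).of_norm.hasSum

lemma neg_pow_natAbs_sq (z : 𝕜) (n : ℤ) :
    (-z) ^ (n.natAbs ^ 2) = (if Even n then 1 else -1) * z ^ (n.natAbs ^ 2) := by
  split_ifs with h
  · rw [one_mul, Even.neg_pow]
    exact (Int.natAbs_even.2 h).pow_of_ne_zero two_ne_zero
  · rw [neg_one_mul, Odd.neg_pow]
    exact (Int.natAbs_odd.2 (Int.not_even_iff_odd.1 h)).pow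

lemma injective_sum_diff : Function.Injective (fun p : ℤ × ℤ => (p.1 + p.2, p.1 - p.2)) := by
  rintro ⟨a, b⟩ ⟨c, d⟩ h
  simp only [Prod.mk.injEq] at h ⊢
  omega

lemma pow_natAbs_sum_diff (z : 𝕜) (m n : ℤ) :
    z ^ ((m + n).natAbs ^ 2) * z ^ ((m - n).natAbs ^ 2)
      = (z ^ 2) ^ (m.natAbs ^ 2) * (z ^ 2) ^ (n.natAbs ^ 2) := by
  rw [← pow_add, ← pow_mul, ← pow_mul, ← pow_add]
  congr 1
  zify
  simp only [sq_abs]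
  ring

lemma mem_range_sum_diff {a b : ℤ} (h : Even (a + b)) :
    (a, b) ∈ Set.range (fun p : ℤ × ℤ => (p.1 + p.2, p.1 - p.2)) := by
  obtain ⟨m, hm⟩ := h
  refine ⟨(m, a - m), ?_⟩
  simp only [Prod.mk.injEq]
  omega

lemma hasSum_mul_of_summable_norm [CompleteSpace 𝕜] {ι : Type*} {f g : ι → 𝕜} {a b : 𝕜} (hf : HasSum f a)
    (hg : HasSum g b) (hf' : Summable (fun i => ‖f i‖)) (hg' : Summable (fun i => ‖g i‖)) :
    HasSum (fun p : ι × ι => f p.1 * g p.2) (a * b) :=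
  hf.mul hg (summable_mul_of_summable_norm hf' hg')

lemma theta_mul_theta [CompleteSpace 𝕜] {z w : 𝕜} (hz : ‖z‖ < 1) (hw : ‖w‖ < 1) :
    HasSum (fun p : ℤ × ℤ => z ^ (p.1.natAbs ^ 2) * w ^ (p.2.natAbs ^ 2)) (theta z * theta w) := by
  have h := hasSum_mul_of_summable_norm (hasSum_theta hz) (hasSum_theta hw)
    (summable_norm_theta hz) (summable_norm_theta hw)
  exact h

lemma theta_sq_add_theta_neg_sq [CompleteSpace 𝕜] {z : 𝕜} (hz : ‖z‖ < 1) :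
    theta z ^ 2 + theta (-z) ^ 2 = 2 * theta (z ^ 2) ^ 2 := by
  have hz' : ‖-z‖ < 1 := by rwa [norm_neg]
  have hz2 : ‖z ^ 2‖ < 1 := by rw [norm_pow]; exact pow_lt_one₀ (norm_nonneg z) hz two_ne_zero
  have h1 := (theta_mul_theta hz hz).add (theta_mul_theta hz' hz')
  rw [← sq, ← sq] at h1
  have h2 := (theta_mul_theta hz2 hz2).mul_left 2
  rw [← sq] at h2
  rw [← injective_sum_diff.hasSum_iff] at h1
  · refine h1.unique (h2.congr_fun ?_)
    rintro ⟨m, n⟩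
    have := pow_natAbs_sum_diff z m n
    have h : Even (m - n) ↔ Even (m + n) := by
      rw [Int.even_sub, Int.even_add]
    simp only [Function.comp_apply, neg_pow_natAbs_sq, h]
    split_ifs <;> linear_combination 2 * this
  · rintro ⟨a, b⟩ hab
    have h : ¬ Even (a + b) := fun h => hab (mem_range_sum_diff h)
    simp only [neg_pow_natAbs_sq]
    rw [Int.even_add] at h
    by_cases ha : Even a <;> by_cases hb : Even b <;> simp [ha, hb] at h ⊢

lemma theta_mul_theta_neg [CompleteSpace 𝕜] [CharZero 𝕜] {z : 𝕜} (hz : ‖z‖ < 1) :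
    theta z * theta (-z) = theta (-z ^ 2) ^ 2 := by
  have hz' : ‖-z‖ < 1 := by rwa [norm_neg]
  have hz2 : ‖-z ^ 2‖ < 1 := by
    rw [norm_neg, norm_pow]; exact pow_lt_one₀ (norm_nonneg z) hz two_ne_zero
  have h1 := (theta_mul_theta hz hz').add (theta_mul_theta hz' hz)
  have h2 := (theta_mul_theta hz2 hz2).mul_left 2
  rw [← sq] at h2
  rw [← injective_sum_diff.hasSum_iff] at h1
  · suffices h : theta z * theta (-z) + theta (-z) * theta z = 2 * theta (-z ^ 2) ^ 2 by
      linear_combination h / 2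
    refine h1.unique (h2.congr_fun ?_)
    rintro ⟨m, n⟩
    have := pow_natAbs_sum_diff z m n
    simp only [Function.comp_apply, neg_pow_natAbs_sq, Int.even_sub, Int.even_add]
    by_cases ha : Even m <;> by_cases hb : Even n <;> simp [ha, hb] <;>
      first | linear_combination 2 * this | linear_combination -2 * this
  · rintro ⟨a, b⟩ hab
    have h : ¬ Even (a + b) := fun h => hab (mem_range_sum_diff h)
    simp only [neg_pow_natAbs_sq]
    rw [Int.even_add] at h
    by_cases ha : Even a <;> by_cases hb : Even b <;> simp [ha, hb] at h ⊢

lemma ofReal_theta (q : ℝ) : ((theta q : ℝ) : ℂ) = theta (q : ℂ) := by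
  simp [theta, Complex.ofReal_tsum]

lemma conj_theta (z : ℂ) : (starRingEnd ℂ) (theta z) = theta ((starRingEnd ℂ) z) := by
  simp [theta, Complex.conj_tsum]

/-! ### The theta series at real arguments -/

lemma summable_theta_real {q : ℝ} (hq : |q| < 1) : Summable (fun n : ℤ => q ^ (n.natAbs ^ 2)) :=
  (summable_norm_theta (𝕜 := ℝ) hq).of_norm

lemma one_le_theta {q : ℝ} (h0 : 0 ≤ q) (h1 : q < 1) : 1 ≤ theta q := by
  have := (summable_theta_real (abs_lt.2 ⟨by linarith, h1⟩)).le_tsum 0 (fun n _ => by positivity)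
  simpa [theta] using this

lemma theta_sub_one_le {q : ℝ} (h0 : 0 ≤ q) (h1 : q ≤ 1 / 2) : theta q - 1 ≤ 4 * q := by
  have hq1 : q < 1 := by linarith
  have hs := summable_theta_real (q := q) (abs_lt.2 ⟨by linarith, hq1⟩)
  have hg := hasSum_geometric_of_lt_one h0 hq1
  have hz : HasSum (fun n : ℤ => q ^ n.natAbs) ((1 - q)⁻¹ + (1 - q)⁻¹ - 1) := by
    have := HasSum.of_nat_of_neg (f := fun n : ℤ => q ^ n.natAbs) (by simpa using hg)
      (by simpa using hg)
    simpa using this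
  have h : theta q ≤ (1 - q)⁻¹ + (1 - q)⁻¹ - 1 := by
    refine hasSum_le (fun n => ?_) hs.hasSum hz
    exact pow_le_pow_of_le_one h0 hq1.le (Nat.le_self_pow two_ne_zero _)
  have h2 : (1 - q)⁻¹ ≤ 1 + 2 * q := by
    rw [inv_le_iff_one_le_mul₀ (by linarith)]
    nlinarith
  linarith

lemma theta_sub_theta_neg_eq {q : ℝ} (h0 : 0 ≤ q) (h1 : q < 1) :
    HasSum (fun n : ℤ => if Even n then 0 else 2 * q ^ (n.natAbs ^ 2))
      (theta q - theta (-q)) := by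
  have hs := summable_theta_real (q := q) (abs_lt.2 ⟨by linarith, h1⟩)
  have hs' := summable_theta_real (q := -q) (by rw [abs_neg]; exact abs_lt.2 ⟨by linarith, h1⟩)
  refine (hs.hasSum.sub hs'.hasSum).congr_fun fun n => ?_
  simp only [neg_pow_natAbs_sq]
  split_ifs <;> ring

lemma two_mul_le_theta_sub {q : ℝ} (h0 : 0 ≤ q) (h1 : q < 1) :
    2 * q ≤ theta q - theta (-q) := by
  have h := theta_sub_theta_neg_eq h0 h1
  have := le_hasSum h 1 (fun n _ => by split_ifs <;> positivity)
  simpa using this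

lemma theta_sub_le {q : ℝ} (h0 : 0 ≤ q) (h1 : q ≤ 1 / 2) :
    theta q - theta (-q) ≤ 8 * q := by
  have hq1 : q < 1 := by linarith
  have h := theta_sub_theta_neg_eq h0 hq1
  have hs := ((summable_theta_real (q := q) (abs_lt.2 ⟨by linarith, hq1⟩)).hasSum.sub
    (hasSum_ite_eq (0:ℤ) (1:ℝ))).mul_left 2
  have h2 : theta q - theta (-q) ≤ 2 * (theta q - 1) := by
    refine hasSum_le (fun n => ?_) h hs
    by_cases hn : n = 0
    · simp [hn]
    · simp only [hn, if_false, sub_zero]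
      split_ifs
      · positivity
      · exact le_rfl
  linarith [theta_sub_one_le h0 h1]

lemma theta_neg_nonneg {q : ℝ} (h0 : 0 ≤ q) (h1 : q < 1) : 0 ≤ theta (-q) := by
  have h := theta_mul_theta_neg (z := q) (by rw [Real.norm_eq_abs, abs_lt]; constructor <;> linarith)
  have h2 := one_le_theta h0 h1
  by_contra hneg
  push Not at hneg
  nlinarith [sq_nonneg (theta (-q ^ 2))]

lemma theta_neg_pos {q : ℝ} (h0 : 0 ≤ q) (h1 : q < 1) : 0 < theta (-q) := by
  refine (theta_neg_nonneg h0 h1).lt_of_ne' fun hq => ?_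
  have hall : ∀ n : ℕ, theta (-q ^ (2 ^ n)) = 0 := by
    intro n
    induction n with
    | zero => simpa using hq
    | succ n ih =>
      have h := theta_mul_theta_neg (z := q ^ (2 ^ n)) (by
        rw [Real.norm_of_nonneg (by positivity)]
        exact pow_lt_one₀ h0 h1 (by positivity))
      rw [ih, mul_zero, ← pow_mul, ← pow_succ] at h
      exact pow_eq_zero_iff two_ne_zero |>.1 h.symm
  have hlim : Tendsto (fun n : ℕ => q ^ (2 ^ n)) atTop (𝓝 0) :=
    (tendsto_pow_atTop_nhds_zero_of_lt_one h0 h1).comp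
      (tendsto_pow_atTop_atTop_of_one_lt one_lt_two)
  obtain ⟨n, hn⟩ := (hlim.eventually (gt_mem_nhds (show (0:ℝ) < 1 / 16 by norm_num))).exists
  have hpos : 0 ≤ q ^ (2 ^ n) := by positivity
  have := theta_sub_le hpos (by linarith)
  have := one_le_theta hpos (by linarith)
  have := hall n
  linarith

end Theta

end EllipticRatio

namespace EllipticRatio

/-- The complementary modulus attached to the nome `q`. -/
noncomputable def coModulus (q : ℝ) : ℝ := (theta (-q) / theta q) ^ 2

/-- The period ratio of the lattice, as a function of the complementary modulus `c`. -/
noncomputable def periodRatio (c : ℝ) : ℝ := EllK c / EllK √(1 - c^2)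

lemma theta_ratio_pos {q : ℝ} (h0 : 0 < q) (h1 : q < 1) : 0 < theta (-q) / theta q :=
  div_pos (theta_neg_pos h0.le h1) (zero_lt_one.trans_le (one_le_theta h0.le h1))

lemma one_sub_theta_ratio {q : ℝ} (h0 : 0 < q) (h1 : q < 1) :
    1 - theta (-q) / theta q = (theta q - theta (-q)) / theta q := by
  have := zero_lt_one.trans_le (one_le_theta h0.le h1)
  field_simp

lemma theta_ratio_lt_one {q : ℝ} (h0 : 0 < q) (h1 : q < 1) : theta (-q) / theta q < 1 := by
  rw [div_lt_one (zero_lt_one.trans_le (one_le_theta h0.le h1))]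
  linarith [two_mul_le_theta_sub h0.le h1]

lemma coModulus_pos {q : ℝ} (h0 : 0 < q) (h1 : q < 1) : 0 < coModulus q :=
  pow_pos (theta_ratio_pos h0 h1) 2

lemma coModulus_lt_one {q : ℝ} (h0 : 0 < q) (h1 : q < 1) : coModulus q < 1 :=
  pow_lt_one₀ (theta_ratio_pos h0 h1).le (theta_ratio_lt_one h0 h1) two_ne_zero

lemma coModulus_sq {q : ℝ} (h0 : 0 < q) (h1 : q < 1) :
    coModulus (q ^ 2) = 2 * √(coModulus q) / (1 + coModulus q) := by
  have hq : ‖q‖ < 1 := by rwa [Real.norm_of_nonneg h0.le]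
  have hq2 : q ^ 2 < 1 := pow_lt_one₀ h0.le h1 two_ne_zero
  have e1 := theta_sq_add_theta_neg_sq hq
  have e2 := theta_mul_theta_neg hq
  have p1 := zero_lt_one.trans_le (one_le_theta h0.le h1)
  have p2 := zero_lt_one.trans_le (one_le_theta (sq_nonneg q) hq2)
  have p3 := theta_neg_pos h0.le h1
  rw [coModulus, coModulus, Real.sqrt_sq (theta_ratio_pos h0 h1).le, div_pow, ← e2]
  have e3 : theta (q ^ 2) ^ 2 = (theta q ^ 2 + theta (-q) ^ 2) / 2 := by linarith
  rw [e3]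
  field_simp

lemma periodRatio_landen {c : ℝ} (h0 : 0 < c) (h1 : c < 1) :
    periodRatio (2 * √c / (1 + c)) = 2 * periodRatio c := by
  have hd : 0 < (1 - c) / (1 + c) := div_pos (by linarith) (by linarith)
  have hd1 : (1 - c) / (1 + c) < 1 := by rw [div_lt_one (by linarith)]; linarith
  have hsq : √c ^ 2 = c := Real.sq_sqrt h0.le
  have hmod : √(1 - (2 * √c / (1 + c)) ^ 2) = (1 - c) / (1 + c) := by
    rw [← Real.sqrt_sq hd.le]
    congr 1
    rw [div_pow, mul_pow, hsq]
    field_simp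
    ring
  have hmod2 : 2 * √((1 - c) / (1 + c)) / (1 + (1 - c) / (1 + c)) = √(1 - c ^ 2) := by
    have h2 : 1 - c ^ 2 = (1 - c) / (1 + c) * (1 + c) ^ 2 := by field_simp; ring
    rw [h2, Real.sqrt_mul hd.le, Real.sqrt_sq (by linarith)]
    field_simp
    ring
  have hK := EllK_gauss hd hd1
  rw [hmod2] at hK
  have hpos := EllK_pos hd.le hd1
  rw [periodRatio, periodRatio, hmod, EllK_gauss h0 h1, hK]
  field_simp
  ring

lemma periodRatio_coModulus_pow {q : ℝ} (h0 : 0 < q) (h1 : q < 1) (n : ℕ) :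
    periodRatio (coModulus (q ^ 2 ^ n)) = 2 ^ n * periodRatio (coModulus q) := by
  induction n with
  | zero => simp
  | succ n ih =>
    have p0 : 0 < q ^ 2 ^ n := by positivity
    have p1 : q ^ 2 ^ n < 1 := pow_lt_one₀ h0.le h1 (by positivity)
    rw [pow_succ, pow_mul, coModulus_sq p0 p1,
      periodRatio_landen (coModulus_pos p0 p1) (coModulus_lt_one p0 p1), ih]
    ring

lemma theta_ratio_bounds {q : ℝ} (h0 : 0 < q) (h1 : q ≤ 1 / 2) :
    2 / 3 * q ≤ 1 - theta (-q) / theta q ∧ 1 - theta (-q) / theta q ≤ 8 * q := by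
  have hq : q < 1 := by linarith
  have a1 := one_le_theta h0.le hq
  have a2 := theta_sub_one_le h0.le h1
  have a3 := two_mul_le_theta_sub h0.le hq
  have a4 := theta_sub_le h0.le h1
  rw [one_sub_theta_ratio h0 hq]
  constructor
  · rw [le_div_iff₀ (by linarith)]; nlinarith
  · rw [div_le_iff₀ (by linarith)]; nlinarith

lemma tendsto_coModulus : Tendsto coModulus (𝓝[>] 0) (𝓝 1) := by
  have h : Tendsto (fun q : ℝ => theta (-q) / theta q) (𝓝[>] 0) (𝓝 1) := by
    have hl : Tendsto (fun q : ℝ => 1 - 8 * q) (𝓝[>] 0) (𝓝 1) := by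
      have : Tendsto (fun q : ℝ => 1 - 8 * q) (𝓝 0) (𝓝 (1 - 8 * 0)) :=
        Continuous.tendsto (by fun_prop) _
      simpa using this.mono_left nhdsWithin_le_nhds
    refine tendsto_of_tendsto_of_tendsto_of_le_of_le' hl tendsto_const_nhds ?_ ?_
    · filter_upwards [Ioo_mem_nhdsGT (show (0:ℝ) < 1 / 2 by norm_num)] with q hq
      linarith [(theta_ratio_bounds hq.1 hq.2.le).2]
    · filter_upwards [Ioo_mem_nhdsGT (show (0:ℝ) < 1 by norm_num)] with q hq
      exact (theta_ratio_lt_one hq.1 hq.2).le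
  simpa [coModulus] using! h.pow 2

lemma log_one_sub_coModulus_sq_bounds {q : ℝ} (h0 : 0 < q) (h1 : q ≤ 1 / 2) :
    Real.log q - Real.log 32 ≤ Real.log (1 - coModulus q ^ 2) ∧
      Real.log (1 - coModulus q ^ 2) ≤ Real.log q + Real.log 32 := by
  obtain ⟨b1, b2⟩ := theta_ratio_bounds h0 h1
  have b3 := theta_ratio_pos h0 (by linarith)
  have b4 := theta_ratio_lt_one h0 (by linarith)
  rw [coModulus]
  set u := theta (-q) / theta q
  have hu : 1 - (u ^ 2) ^ 2 = (1 - u) * (1 + u + u ^ 2 + u ^ 3) := by ring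
  have hu2 : u ^ 2 ≤ 1 := pow_le_one₀ b3.le b4.le
  have hu3 : u ^ 3 ≤ 1 := pow_le_one₀ b3.le b4.le
  have hu4 : 0 < u ^ 2 := by positivity
  have hu5 : 0 < u ^ 3 := by positivity
  have l1 : q / 32 ≤ 1 - (u ^ 2) ^ 2 := by rw [hu]; nlinarith
  have l2 : 1 - (u ^ 2) ^ 2 ≤ q * 32 := by
    rw [hu]
    have : (1 - u) * (1 + u + u ^ 2 + u ^ 3) ≤ (8 * q) * 4 :=
      mul_le_mul b2 (by linarith) (by positivity) (by positivity)
    linarith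
  rw [← Real.log_div h0.ne' (by norm_num), ← Real.log_mul h0.ne' (by norm_num)]
  exact ⟨Real.log_le_log (by positivity) l1,
    Real.log_le_log ((by positivity : 0 < q / 32).trans_le l1) l2⟩

lemma tendsto_EllK_coModulus_div_log :
    Tendsto (fun q => EllK (coModulus q) / (-Real.log q)) (𝓝[>] 0) (𝓝 (1 / 2)) := by
  have hL : Tendsto (fun q : ℝ => -Real.log q) (𝓝[>] 0) atTop :=
    tendsto_neg_atBot_atTop.comp Real.tendsto_log_nhdsGT_zero
  have hc : Tendsto (fun q => 1 / coModulus q) (𝓝[>] 0) (𝓝 1) := by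
    simpa using tendsto_coModulus.inv₀ one_ne_zero
  have aux : ∀ M N : ℝ, Tendsto (fun q : ℝ => 1 / coModulus q * (M / (-Real.log q) + 1 / 2)
      + N / (-Real.log q)) (𝓝[>] 0) (𝓝 (1 / 2)) := by
    intro M N
    have := (hc.mul ((hL.const_div_atTop M).add_const (1 / 2))).add (hL.const_div_atTop N)
    simpa using this
  refine tendsto_of_tendsto_of_tendsto_of_le_of_le' (aux (-(Real.log 32 / 2)) 0)
    (aux (Real.log 2 + Real.log 32 / 2) 1) ?_ ?_
  all_goals
    filter_upwards [Ioo_mem_nhdsGT (show (0:ℝ) < 1 / 2 by norm_num)] with q hq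
    have hq1 : q < 1 := by linarith [hq.2]
    have c0 := coModulus_pos hq.1 hq1
    have c1 := coModulus_lt_one hq.1 hq1
    have hlog : 0 < -Real.log q := neg_pos.2 (Real.log_neg hq.1 hq1)
    have hlog0 : Real.log q ≠ 0 := (Real.log_neg hq.1 hq1).ne
    obtain ⟨m1, m2⟩ := log_one_sub_coModulus_sq_bounds hq.1 hq.2.le
    obtain ⟨k1, k2⟩ := EllK_log_bounds c0 c1
  · rw [le_div_iff₀ hlog]
    refine le_trans (le_of_eq ?_) ((mul_le_mul_of_nonneg_left
      (?_ : -(Real.log 32 / 2) + -Real.log q / 2 ≤ _) (by positivity)).trans k1)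
    · field_simp
      ring
    · have : 0 ≤ Real.log (1 + coModulus q) := Real.log_nonneg (by linarith)
      linarith
  · rw [div_le_iff₀ hlog]
    refine k2.trans (le_trans (add_le_add_left (mul_le_mul_of_nonneg_left
      (?_ : _ ≤ Real.log 2 + Real.log 32 / 2 + -Real.log q / 2) (by positivity)) 1)
      (le_of_eq ?_))
    · have : Real.log (1 + coModulus q) ≤ Real.log 2 :=
        Real.log_le_log (by linarith) (by linarith)
      linarith
    · field_simp
      ring

lemma tendsto_EllK_modulus :
    Tendsto (fun q => EllK √(1 - coModulus q ^ 2)) (𝓝[>] 0) (𝓝 (π / 2)) := by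
  have hc : Tendsto (fun q => 1 / coModulus q * (π / 2)) (𝓝[>] 0) (𝓝 (π / 2)) := by
    simpa using (tendsto_coModulus.inv₀ one_ne_zero).mul_const (π / 2)
  refine tendsto_of_tendsto_of_tendsto_of_le_of_le' tendsto_const_nhds hc ?_ ?_
  all_goals
    filter_upwards [Ioo_mem_nhdsGT (show (0:ℝ) < 1 by norm_num)] with q hq
    have c0 := coModulus_pos hq.1 hq.2
    have c1 := coModulus_lt_one hq.1 hq.2
    have h : √(1 - coModulus q ^ 2) < 1 := by
      rw [Real.sqrt_lt' one_pos]
      nlinarith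
  · exact EllK_ge (Real.sqrt_nonneg _) h
  · have := EllK_le (Real.sqrt_nonneg _) h
    rwa [Real.sq_sqrt (by nlinarith), sub_sub_cancel, Real.sqrt_sq c0.le] at this

/-- The nome determines the period ratio. -/
lemma periodRatio_coModulus {q : ℝ} (h0 : 0 < q) (h1 : q < 1) :
    periodRatio (coModulus q) = -Real.log q / π := by
  have hlim : Tendsto (fun q => periodRatio (coModulus q) / (-Real.log q)) (𝓝[>] 0)
      (𝓝 (1 / π)) := by
    have := tendsto_EllK_coModulus_div_log.div tendsto_EllK_modulus (by positivity)
    refine (this.congr fun q => ?_).trans_eq ?_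
    · simp only [Pi.div_apply, periodRatio]
      rw [div_right_comm]
    · congr 1
      field_simp
  have hq : Tendsto (fun n : ℕ => q ^ 2 ^ n) atTop (𝓝[>] 0) :=
    tendsto_nhdsWithin_iff.2 ⟨(tendsto_pow_atTop_nhds_zero_of_lt_one h0.le h1).comp
      (tendsto_pow_atTop_atTop_of_one_lt one_lt_two), Eventually.of_forall fun n => by
        simp only [mem_Ioi]; positivity⟩
  have h2 := hlim.comp hq
  have hlog : Real.log q < 0 := Real.log_neg h0 h1
  have h3 : periodRatio (coModulus q) / (-Real.log q) = 1 / π := by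
    refine tendsto_nhds_unique (tendsto_const_nhds.congr fun n => ?_) h2
    rw [Function.comp_apply, periodRatio_coModulus_pow h0 h1, Real.log_pow]
    push_cast
    field_simp
  rw [div_eq_iff (by linarith)] at h3
  rw [h3]
  ring

end EllipticRatio

namespace EllipticRatio

/-! ### A finite form of Jacobi's triple product identity -/

section TripleProduct

/-- Gaussian binomial coefficients. -/
def qBinom {R : Type*} [CommRing R] (p : R) : ℕ → ℕ → R
  | _, 0 => 1
  | 0, _ + 1 => 0
  | N + 1, j + 1 => qBinom p N (j + 1) + p ^ (N - j) * qBinom p N j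

/-- The `q`-Pochhammer product `∏ (1 - p ^ (k + 1))`. -/
def qFac {R : Type*} [CommRing R] (p : R) (n : ℕ) : R := ∏ k ∈ Finset.range n, (1 - p ^ (k + 1))

variable {R : Type*} [CommRing R]

lemma qBinom_zero_right (p : R) (N : ℕ) : qBinom p N 0 = 1 := by
  cases N <;> rfl

lemma qBinom_eq_zero (p : R) : ∀ {N j : ℕ}, N < j → qBinom p N j = 0
  | 0, j + 1, _ => rfl
  | N + 1, j + 1, h => by
    rw [qBinom, qBinom_eq_zero p (by omega : N < j + 1), qBinom_eq_zero p (by omega : N < j)]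
    simp

lemma qFac_succ (p : R) (n : ℕ) : qFac p (n + 1) = qFac p n * (1 - p ^ (n + 1)) :=
  Finset.prod_range_succ _ n

lemma qBinom_mul_qFac (p : R) (N : ℕ) : ∀ j m : ℕ, j + m = N →
    qBinom p N j * qFac p j * qFac p m = qFac p N := by
  induction N with
  | zero =>
    intro j m h
    obtain ⟨rfl, rfl⟩ : j = 0 ∧ m = 0 := by omega
    simp [qBinom, qFac]
  | succ N ih =>
    rintro (_ | j) m h
    · obtain rfl : m = N + 1 := by omega
      simp [qBinom, qFac]
    · have h1 := ih j m (by omega)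
      have hm : N - j = m := by omega
      rw [qBinom, hm]
      rcases m with _ | m
      · obtain rfl : j = N := by omega
        rw [qBinom_eq_zero p (Nat.lt_succ_self j), qFac_succ p j]
        linear_combination (1 - p ^ (j + 1)) * h1
      · have h2 := ih (j + 1) m (by omega)
        rw [qFac_succ p N, show N + 1 = (m + 1) + (j + 1) by omega, pow_add, qFac_succ p m]
        rw [qFac_succ p m] at h1
        linear_combination (1 - p ^ (m + 1)) * h2 +
          p ^ (m + 1) * (1 - p ^ (j + 1)) * h1 +
          p ^ (m + 1) * qBinom p N j * qFac p m * (1 - p ^ (m + 1)) * qFac_succ p j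

lemma prod_add_mul_pow (p x y : R) (N : ℕ) :
    ∏ k ∈ Finset.range N, (y + x * p ^ k) =
      ∑ j ∈ Finset.range (N + 1), qBinom p N j * p ^ (j.choose 2) * x ^ j * y ^ (N - j) := by
  induction N with
  | zero => simp [qBinom]
  | succ N ih =>
    have h1 : ∑ j ∈ Finset.range (N + 1), qBinom p N j * p ^ (j.choose 2) * x ^ j * y ^ (N - j) * y
        = ∑ j ∈ Finset.range (N + 1), qBinom p N (j + 1) * p ^ ((j + 1).choose 2) * x ^ (j + 1)
          * y ^ (N - j) + y ^ (N + 1) := by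
      have : ∑ j ∈ Finset.range (N + 1), qBinom p N j * p ^ (j.choose 2) * x ^ j * y ^ (N - j) * y
          = ∑ j ∈ Finset.range (N + 1 + 1),
            qBinom p N j * p ^ (j.choose 2) * x ^ j * y ^ (N + 1 - j) := by
        rw [Finset.sum_range_succ _ (N + 1), qBinom_eq_zero p (Nat.lt_succ_self N)]
        simp only [zero_mul, add_zero]
        refine Finset.sum_congr rfl fun j hj => ?_
        rw [mul_assoc, ← pow_succ, Nat.sub_add_comm (by simpa [Nat.lt_succ_iff] using hj)]
      rw [this, Finset.sum_range_succ']
      simp [qBinom_zero_right]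
    rw [Finset.prod_range_succ, ih, mul_add, Finset.sum_mul, h1, Finset.sum_range_succ' _ (N + 1),
      Finset.sum_mul]
    simp only [qBinom, add_mul, Finset.sum_add_distrib, Nat.add_sub_add_right]
    have h2 : ∑ j ∈ Finset.range (N + 1), qBinom p N j * p ^ (j.choose 2) * x ^ j * y ^ (N - j)
          * (x * p ^ N) = ∑ j ∈ Finset.range (N + 1), p ^ (N - j) * qBinom p N j *
          p ^ ((j + 1).choose 2) * x ^ (j + 1) * y ^ (N - j) := by
      refine Finset.sum_congr rfl fun j hj => ?_
      have hj' : j ≤ N := by simpa [Nat.lt_succ_iff] using hj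
      have : p ^ N = p ^ (N - j) * p ^ j := by rw [← pow_add, Nat.sub_add_cancel hj']
      rw [this, Nat.choose_succ_succ' j 1, Nat.choose_one_right, pow_add, pow_succ]
      ring
    rw [h2]
    simp
    ring

lemma two_mul_choose_two_add (j : ℕ) : 2 * j.choose 2 + j = j ^ 2 := by
  induction j with
  | zero => rfl
  | succ j ih =>
    rw [Nat.choose_succ_succ' j 1, Nat.choose_one_right]
    linarith

lemma prod_one_add_odd_pow_sq {K : Type*} [Field K] {z : K} (hz : z ≠ 0) (n : ℕ) :
    (∏ k ∈ Finset.range n, (1 + z ^ (2 * k + 1))) ^ 2 =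
      ∑ j ∈ Finset.range (2 * n + 1),
        qBinom (z ^ 2) (2 * n) j * z ^ (((j : ℤ) - n).natAbs ^ 2) := by
  have hL : ∏ k ∈ Finset.range (2 * n), (z ^ (2 * n) + z * (z ^ 2) ^ k) =
      z ^ (3 * n ^ 2) * (∏ k ∈ Finset.range n, (1 + z ^ (2 * k + 1))) ^ 2 := by
    have e1 : ∏ k ∈ Finset.range n, (z ^ (2 * n) + z * (z ^ 2) ^ k) =
        z ^ (n ^ 2) * ∏ k ∈ Finset.range n, (1 + z ^ (2 * k + 1)) := by
      have e3 : ∀ m : ℕ, ∏ k ∈ Finset.range m, z ^ (2 * k + 1) = z ^ (m ^ 2) := by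
        intro m
        induction m with
        | zero => simp
        | succ m ih => rw [Finset.prod_range_succ, ih, ← pow_add]; congr 1; ring
      rw [← e3, ← Finset.prod_range_reflect (fun k => 1 + z ^ (2 * k + 1)),
        ← Finset.prod_mul_distrib]
      refine Finset.prod_congr rfl fun k hk => ?_
      have hk' : k < n := by simpa using hk
      have : 2 * n = (2 * k + 1) + (2 * (n - 1 - k) + 1) := by omega
      rw [this, pow_add, ← pow_mul]
      ring
    have e2 : ∏ k ∈ Finset.range n, (z ^ (2 * n) + z * (z ^ 2) ^ (n + k)) =
        z ^ (2 * n ^ 2) * ∏ k ∈ Finset.range n, (1 + z ^ (2 * k + 1)) := by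
      have e3 : z ^ (2 * n ^ 2) = ∏ k ∈ Finset.range n, z ^ (2 * n) := by
        rw [Finset.prod_const, Finset.card_range, ← pow_mul]
        congr 1
        ring
      rw [e3, ← Finset.prod_mul_distrib]
      refine Finset.prod_congr rfl fun k _ => ?_
      rw [← pow_mul]
      ring
    rw [two_mul n, Finset.prod_range_add, ← two_mul, e1, e2]
    ring
  have hz3 : z ^ (3 * n ^ 2) ≠ 0 := pow_ne_zero _ hz
  apply mul_left_cancel₀ hz3
  rw [← hL, prod_add_mul_pow, Finset.mul_sum]
  refine Finset.sum_congr rfl fun j hj => ?_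
  have hj' : j ≤ 2 * n := by simpa [Nat.lt_succ_iff] using hj
  have hexp : 2 * j.choose 2 + j + 2 * n * (2 * n - j) =
      3 * n ^ 2 + ((j : ℤ) - n).natAbs ^ 2 := by
    rw [two_mul_choose_two_add]
    zify [hj']
    rw [sq_abs]
    ring
  calc qBinom (z ^ 2) (2 * n) j * (z ^ 2) ^ j.choose 2 * z ^ j * (z ^ (2 * n)) ^ (2 * n - j)
      = qBinom (z ^ 2) (2 * n) j * z ^ (2 * j.choose 2 + j + 2 * n * (2 * n - j)) := by
        rw [← pow_mul, ← pow_mul, pow_add, pow_add]; ring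
    _ = _ := by rw [hexp, pow_add]; ring

end TripleProduct

lemma tendsto_qFac {p : ℂ} (hp : ‖p‖ < 1) :
    (∀ n, qFac p n ≠ 0) ∧ ∃ l : ℂ, l ≠ 0 ∧ Tendsto (qFac p) atTop (𝓝 l) := by
  have hne : ∀ k : ℕ, 1 + -p ^ (k + 1) ≠ 0 := by
    intro k h
    have h1 : p ^ (k + 1) = 1 := by linear_combination -h
    have h2 : ‖p‖ ^ (k + 1) < 1 := pow_lt_one₀ (norm_nonneg p) hp (by simp)
    rw [← norm_pow, h1, norm_one] at h2
    exact lt_irrefl _ h2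
  have hs : Summable (fun k : ℕ => ‖-p ^ (k + 1)‖) := by
    simp only [norm_neg, norm_pow]
    exact (summable_nat_add_iff 1).2 (summable_geometric_of_lt_one (norm_nonneg p) hp)
  refine ⟨fun n => Finset.prod_ne_zero_iff.2 fun k _ => ?_, _,
    tprod_one_add_ne_zero_of_summable hne hs, ?_⟩
  · simpa [sub_eq_add_neg] using hne k
  · simpa only [qFac, sub_eq_add_neg] using!
      (multipliable_one_add_of_summable hs).tendsto_prod_tprod_nat

lemma exists_norm_le_of_tendsto {u : ℕ → ℂ} {l : ℂ} (h : Tendsto u atTop (𝓝 l)) :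
    ∃ B : ℝ, ∀ n, ‖u n‖ ≤ B := by
  obtain ⟨B, hB⟩ := h.norm.bddAbove_range
  exact ⟨B, fun n => hB ⟨n, rfl⟩⟩

/-- The product expansion of the theta series. -/
lemma tendsto_qFac_mul_prod {z : ℂ} (hz0 : z ≠ 0) (hz : ‖z‖ < 1) :
    Tendsto (fun n => qFac (z ^ 2) n * (∏ k ∈ Finset.range n, (1 + z ^ (2 * k + 1))) ^ 2)
      atTop (𝓝 (theta z)) := by
  have hp : ‖z ^ 2‖ < 1 := by rw [norm_pow]; exact pow_lt_one₀ (norm_nonneg z) hz two_ne_zero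
  obtain ⟨hne, l, hl, hlim⟩ := tendsto_qFac hp
  set f := qFac (z ^ 2) with hf
  set F : ℕ → ℤ → ℂ := fun n i =>
    if i.natAbs ≤ n then f n * qBinom (z ^ 2) (2 * n) (i + n).toNat * z ^ (i.natAbs ^ 2) else 0
    with hF
  have hcoef : ∀ (n : ℕ) (i : ℤ), i.natAbs ≤ n →
      F n i = f n * f (2 * n) * (f (i + n).toNat)⁻¹ * (f ((n : ℤ) - i).toNat)⁻¹
        * z ^ (i.natAbs ^ 2) := by
    intro n i hi
    have h := qBinom_mul_qFac (z ^ 2) (2 * n) (i + n).toNat ((n : ℤ) - i).toNat (by omega)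
    rw [← hf] at h
    have h1 := hne (i + n).toNat
    have h2 := hne ((n : ℤ) - i).toNat
    simp only [hF, hi, if_true]
    rw [← h]
    field_simp
  have hsum : ∀ n : ℕ, f n * (∏ k ∈ Finset.range n, (1 + z ^ (2 * k + 1))) ^ 2 = ∑' i, F n i := by
    intro n
    rw [prod_one_add_odd_pow_sq hz0, tsum_eq_sum (s := Finset.Icc (-(n : ℤ)) n), Finset.mul_sum]
    · refine Finset.sum_nbij' (fun j => (j : ℤ) - n) (fun i => (i + n).toNat) ?_ ?_ ?_ ?_ ?_
      · intro j hj
        simp only [Finset.mem_range, Finset.mem_Icc] at hj ⊢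
        omega
      · intro j hj
        simp only [Finset.mem_range, Finset.mem_Icc] at hj ⊢
        omega
      · intro j hj
        simp
      · intro j hj
        simp only [Finset.mem_Icc] at hj ⊢
        omega
      · intro j hj
        simp only [Finset.mem_range] at hj
        have : ((j : ℤ) - n).natAbs ≤ n := by omega
        simp only [hF, this, if_true, sub_add_cancel, Int.toNat_natCast]
        ring
    · intro i hi
      simp only [Finset.mem_Icc, not_and_or, not_le] at hi
      have : ¬ i.natAbs ≤ n := by omega
      simp [hF, this]
  simp_rw [hsum]
  obtain ⟨A, hA⟩ := exists_norm_le_of_tendsto hlim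
  obtain ⟨B, hB⟩ := exists_norm_le_of_tendsto (hlim.inv₀ hl)
  have hA0 : 0 ≤ A := (norm_nonneg _).trans (hA 0)
  have hB0 : 0 ≤ B := (norm_nonneg _).trans (hB 0)
  refine tendsto_tsum_of_dominated_convergence ((summable_norm_theta hz).mul_left (A * A * B * B))
    ?_ (Eventually.of_forall fun n i => ?_)
  · intro i
    have t1 : Tendsto (fun n : ℕ => 2 * n) atTop atTop :=
      tendsto_id.const_mul_atTop' two_pos
    have t2 : Tendsto (fun n : ℕ => (i + n).toNat) atTop atTop := by
      refine tendsto_atTop.2 fun b => ?_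
      filter_upwards [eventually_ge_atTop (b + i.natAbs)] with n hn
      omega
    have t3 : Tendsto (fun n : ℕ => ((n : ℤ) - i).toNat) atTop atTop := by
      refine tendsto_atTop.2 fun b => ?_
      filter_upwards [eventually_ge_atTop (b + i.natAbs)] with n hn
      omega
    have := ((((hlim.mul (hlim.comp t1)).mul ((hlim.comp t2).inv₀ hl)).mul
      ((hlim.comp t3).inv₀ hl))).mul_const (z ^ (i.natAbs ^ 2))
    have e : l * l * l⁻¹ * l⁻¹ * z ^ (i.natAbs ^ 2) = z ^ (i.natAbs ^ 2) := by field_simp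
    rw [e] at this
    refine this.congr' ?_
    filter_upwards [eventually_ge_atTop i.natAbs] with n hn
    rw [hcoef n i hn]
    rfl
  · by_cases hi : i.natAbs ≤ n
    · rw [hcoef n i hi]
      simp only [norm_mul]
      have b1 := hB (i + n).toNat
      have b2 := hB ((n : ℤ) - i).toNat
      gcongr
      · exact hA n
      · exact hA _
    · simp only [hF, hi, if_false, norm_zero]
      positivity

end EllipticRatio

namespace EllipticRatio

/-! ### Theta quotients and arctangent series -/

section Angle

/-- The partial sums of the arctangent series `4 * ∑ (-1) ^ k * arctan (r ^ (2 * k + 1))`. -/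
noncomputable def arctanSum (r : ℝ) (N : ℕ) : ℝ :=
  4 * ∑ k ∈ Finset.range N, (-1) ^ k * Real.arctan (r ^ (2 * k + 1))

lemma alternating_sum_mem_Icc (N : ℕ) : ∀ a : ℕ → ℝ, Antitone a → (∀ n, 0 ≤ a n) →
    ∑ k ∈ Finset.range N, (-1) ^ k * a k ∈ Icc 0 (a 0) := by
  induction N with
  | zero => intro a _ h0; simpa using h0 0
  | succ N ih =>
    intro a ha h0
    have h := ih (fun n => a (n + 1)) (fun m n hmn => ha (by omega)) (fun n => h0 _)
    have h1 : a 1 ≤ a 0 := ha (by norm_num)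
    rw [Finset.sum_range_succ']
    simp only [pow_succ, mul_neg_one, neg_mul, Finset.sum_neg_distrib, pow_zero, one_mul]
    obtain ⟨h2, h3⟩ := h
    simp only [zero_add] at h3
    constructor <;> linarith

lemma antitone_arctan_pow {r : ℝ} (h0 : 0 ≤ r) (h1 : r ≤ 1) :
    Antitone fun k : ℕ => Real.arctan (r ^ (2 * k + 1)) := fun m n hmn =>
  Real.arctan_strictMono.monotone (pow_le_pow_of_le_one h0 h1 (by omega))

lemma arctan_pow_nonneg {r : ℝ} (h0 : 0 ≤ r) (k : ℕ) : 0 ≤ Real.arctan (r ^ (2 * k + 1)) :=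
  Real.arctan_nonneg.2 (pow_nonneg h0 _)

lemma arctan_le_self {x : ℝ} (hx : 0 ≤ x) : Real.arctan x ≤ x := by
  rcases hx.eq_or_lt with rfl | hx
  · simp
  · have h := Real.lt_tan (Real.arctan_pos.2 hx) (Real.arctan_lt_pi_div_two x)
    rw [Real.tan_arctan] at h
    exact h.le

lemma arctanSum_nonneg {r : ℝ} (h0 : 0 ≤ r) (h1 : r ≤ 1) (N : ℕ) : 0 ≤ arctanSum r N :=
  mul_nonneg (by norm_num)
    (alternating_sum_mem_Icc N _ (antitone_arctan_pow h0 h1) (arctan_pow_nonneg h0)).1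

lemma arctanSum_le {r : ℝ} (h0 : 0 ≤ r) (h1 : r ≤ 1) (N : ℕ) :
    arctanSum r N ≤ 4 * Real.arctan r := by
  have := (alternating_sum_mem_Icc N _ (antitone_arctan_pow h0 h1) (arctan_pow_nonneg h0)).2
  simp only [mul_zero, zero_add, pow_one] at this
  exact mul_le_mul_of_nonneg_left this (by norm_num)

lemma exists_tendsto_arctanSum {r : ℝ} (h0 : 0 ≤ r) (h1 : r < 1) :
    ∃ F, Tendsto (arctanSum r) atTop (𝓝 F) := by
  have hs : Summable fun k : ℕ => (-1) ^ k * Real.arctan (r ^ (2 * k + 1)) := by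
    refine Summable.of_norm_bounded (g := fun k : ℕ => r ^ k)
      (summable_geometric_of_lt_one h0 h1) fun k => ?_
    rw [norm_mul, norm_pow, norm_neg, norm_one, one_pow, one_mul,
      Real.norm_of_nonneg (arctan_pow_nonneg h0 k)]
    exact (arctan_le_self (pow_nonneg h0 _)).trans
      (pow_le_pow_of_le_one h0 h1.le (by omega))
  exact ⟨_, (hs.hasSum.tendsto_sum_nat).const_mul 4⟩

lemma one_add_I_mul (x : ℝ) : (1 + Complex.I * x : ℂ) =
    (√(1 + x ^ 2) : ℝ) * Complex.exp (Complex.I * (Real.arctan x : ℝ)) := by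
  have hp : 0 < √(1 + x ^ 2) := Real.sqrt_pos.2 (by positivity)
  rw [mul_comm Complex.I (Real.arctan x : ℂ), Complex.exp_mul_I, ← Complex.ofReal_cos,
    ← Complex.ofReal_sin, Real.cos_arctan, Real.sin_arctan]
  have hp' : ((√(1 + x ^ 2) : ℝ) : ℂ) ≠ 0 := by exact_mod_cast hp.ne'
  push_cast
  field_simp

/-- The argument of the product `∏ (1 + (i r) ^ (2 k + 1))` is a sum of arctangents. -/
lemma prod_polar (r : ℝ) (N : ℕ) : ∃ ρ : ℝ, 0 ≤ ρ ∧
    (∏ k ∈ Finset.range N, (1 + (Complex.I * r) ^ (2 * k + 1)) : ℂ) =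
      ρ * Complex.exp (Complex.I * ((arctanSum r N / 4 : ℝ) : ℂ)) := by
  induction N with
  | zero => exact ⟨1, zero_le_one, by simp [arctanSum]⟩
  | succ N ih =>
    obtain ⟨ρ, hρ, h⟩ := ih
    refine ⟨ρ * √(1 + ((-1) ^ N * r ^ (2 * N + 1)) ^ 2), by positivity, ?_⟩
    have h1 : (1 + (Complex.I * r) ^ (2 * N + 1) : ℂ) =
        1 + Complex.I * (((-1) ^ N * r ^ (2 * N + 1) : ℝ) : ℂ) := by
      rw [mul_pow, pow_succ Complex.I, pow_mul, Complex.I_sq]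
      push_cast
      ring
    have h2 : Real.arctan ((-1) ^ N * r ^ (2 * N + 1)) =
        (-1) ^ N * Real.arctan (r ^ (2 * N + 1)) := by
      rcases neg_one_pow_eq_or ℝ N with h | h <;> simp [h]
    rw [Finset.prod_range_succ, h, h1, one_add_I_mul, h2]
    have h3 : arctanSum r (N + 1) / 4 =
        arctanSum r N / 4 + (-1) ^ N * Real.arctan (r ^ (2 * N + 1)) := by
      simp only [arctanSum, Finset.sum_range_succ]
      ring
    rw [h3, Complex.ofReal_add, mul_add, Complex.exp_add]
    push_cast
    ring

lemma cos_of_tendsto_arctanSum {r F : ℝ} (h0 : 0 < r) (h1 : r < 1)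
    (hF : Tendsto (arctanSum r) atTop (𝓝 F)) : Real.cos F = (theta (-r ^ 2) / theta (r ^ 2)) ^ 2 := by
  set z : ℂ := Complex.I * r with hz
  have hr2 : r ^ 2 < 1 := by nlinarith
  have hzn : ‖z‖ < 1 := by simp [hz, abs_of_pos h0, h1]
  have hz0 : z ≠ 0 := by simp [hz, h0.ne']
  have hz2 : z ^ 2 = ((-r ^ 2 : ℝ) : ℂ) := by
    rw [hz, mul_pow, Complex.I_sq]; push_cast; ring
  have hT := tendsto_qFac_mul_prod hz0 hzn
  have key : ∀ N, (qFac (z ^ 2) N * (∏ k ∈ Finset.range N, (1 + z ^ (2 * k + 1))) ^ 2) ^ 2 =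
      ((‖(qFac (z ^ 2) N * (∏ k ∈ Finset.range N, (1 + z ^ (2 * k + 1))) ^ 2)‖ ^ 2 : ℝ) : ℂ) *
        Complex.exp (Complex.I * ((arctanSum r N : ℝ) : ℂ)) := by
    intro N
    obtain ⟨ρ, hρ, h⟩ := prod_polar r N
    have hq : qFac (z ^ 2) N = ((qFac (-r ^ 2) N : ℝ) : ℂ) := by
      rw [hz2]; simp [qFac]
    rw [hq, h]
    have e1 : ‖((qFac (-r ^ 2) N : ℝ) : ℂ) *
        (ρ * Complex.exp (Complex.I * ((arctanSum r N / 4 : ℝ) : ℂ))) ^ 2‖ ^ 2 =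
        (qFac (-r ^ 2) N * ρ ^ 2) ^ 2 := by
      rw [norm_mul, norm_pow, norm_mul, mul_comm Complex.I, Complex.norm_exp_ofReal_mul_I,
        Complex.norm_real, Complex.norm_real, mul_one, mul_pow, mul_pow, Real.norm_eq_abs,
        Real.norm_eq_abs, sq_abs, sq_abs]
    have e2 : Complex.exp (Complex.I * ((arctanSum r N : ℝ) : ℂ)) =
        Complex.exp (Complex.I * ((arctanSum r N / 4 : ℝ) : ℂ)) ^ 4 := by
      rw [← Complex.exp_nat_mul]
      congr 1
      push_cast
      ring
    rw [e1, e2]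
    push_cast
    ring
  have hlim : theta z ^ 2 = ((‖theta z‖ ^ 2 : ℝ) : ℂ) * Complex.exp (Complex.I * (F : ℂ)) := by
    have hL := hT.pow 2
    have hR : Tendsto (fun N =>
      ((‖(qFac (z ^ 2) N * (∏ k ∈ Finset.range N, (1 + z ^ (2 * k + 1))) ^ 2)‖ ^ 2 : ℝ) : ℂ) *
        Complex.exp (Complex.I * ((arctanSum r N : ℝ) : ℂ))) atTop
        (𝓝 (((‖theta z‖ ^ 2 : ℝ) : ℂ) * Complex.exp (Complex.I * (F : ℂ)))) := by
      refine Tendsto.mul ?_ ?_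
      · exact (Complex.continuous_ofReal.tendsto _).comp (hT.norm.pow 2)
      · refine (Complex.continuous_exp.tendsto _).comp (Tendsto.const_mul _ ?_)
        exact (Complex.continuous_ofReal.tendsto _).comp hF
    exact tendsto_nhds_unique hL (hR.congr fun N => (key N).symm)
  have hconj : (starRingEnd ℂ) z = -z := by simp [hz]
  have hnorm : ((‖theta z‖ ^ 2 : ℝ) : ℂ) = ((theta (r ^ 2) ^ 2 : ℝ) : ℂ) := by
    have h := theta_mul_theta_neg hzn
    rw [← hconj, ← conj_theta, Complex.mul_conj, Complex.normSq_eq_norm_sq] at h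
    rw [h, hz2, ← Complex.ofReal_neg, neg_neg, ← ofReal_theta]
    push_cast
    rfl
  have hre : (theta z ^ 2).re = theta (-r ^ 2) ^ 2 := by
    have h := theta_sq_add_theta_neg_sq hzn
    rw [← hconj, ← conj_theta, hz2, ← ofReal_theta, ← map_pow] at h
    have h' := congrArg Complex.re h
    rw [Complex.add_re, Complex.conj_re] at h'
    have : (2 * ((theta (-r ^ 2) : ℝ) : ℂ) ^ 2).re = 2 * theta (-r ^ 2) ^ 2 := by
      have h2 := Complex.re_ofReal_mul 2 (((theta (-r ^ 2) ^ 2 : ℝ) : ℂ))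
      rw [Complex.ofReal_re] at h2
      exact_mod_cast h2
    rw [this] at h'
    linarith
  have hθ : theta (r ^ 2) ≠ 0 := by
    have := one_le_theta (sq_nonneg r) hr2
    linarith [this] |> fun h : (0:ℝ) < theta (r ^ 2) => h.ne'
  rw [hlim, hnorm, Complex.re_ofReal_mul, mul_comm Complex.I, Complex.exp_ofReal_mul_I_re] at hre
  rw [div_pow, eq_div_iff (pow_ne_zero 2 hθ), mul_comm]
  exact hre

end Angle

end EllipticRatio

namespace EllipticRatio

section CatalanIntegral

lemma tendsto_arctanSum {r : ℝ} (h0 : 0 < r) (h1 : r < 1) :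
    Tendsto (arctanSum r) atTop (𝓝 (Real.arccos (coModulus (r ^ 2)))) := by
  obtain ⟨F, hF⟩ := exists_tendsto_arctanSum h0.le h1
  have hF0 : 0 ≤ F := ge_of_tendsto' hF fun N => arctanSum_nonneg h0.le h1.le N
  have hFle : F ≤ π := by
    refine le_of_tendsto' hF fun N => (arctanSum_le h0.le h1.le N).trans ?_
    have h := Real.arctan_strictMono.monotone h1.le
    rw [Real.arctan_one] at h
    linarith
  rw [coModulus, ← cos_of_tendsto_arctanSum h0 h1 hF, Real.arccos_cos hF0 hFle]
  exact hF

lemma integral_arctan_exp {a : ℝ} (ha : 0 < a) :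
    ∫ t in Ioi (0:ℝ), Real.arctan (Real.exp (-a * t)) =
      (∑' n : ℕ, (-1 : ℝ) ^ n / (2 * (n : ℝ) + 1) ^ 2) / a := by
  have hneg : ∀ n : ℕ, -(a * (2 * n + 1)) < 0 := fun n => neg_lt_zero.2 (by positivity)
  have hexp : ∀ n : ℕ, ∫ t in Ioi (0:ℝ), Real.exp (-(a * (2 * n + 1)) * t) =
      1 / (a * (2 * n + 1)) := fun n => by
    rw [integral_exp_mul_Ioi (hneg n)]
    simp [neg_div_neg_eq]
  have hI : ∀ n : ℕ, Integrable (fun t : ℝ => (-1) ^ n / (2 * n + 1) *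
      Real.exp (-(a * (2 * n + 1)) * t)) (volume.restrict (Ioi 0)) := fun n =>
    (integrableOn_exp_mul_Ioi (hneg n) 0).const_mul _
  have hnorm : ∀ n : ℕ, ∫ t in Ioi (0:ℝ), ‖(-1) ^ n / (2 * n + 1) *
      Real.exp (-(a * (2 * n + 1)) * t)‖ = 1 / (a * (2 * n + 1) ^ 2) := fun n => by
    have : ∀ t : ℝ, ‖(-1) ^ n / (2 * n + 1) * Real.exp (-(a * (2 * n + 1)) * t)‖ =
        1 / (2 * n + 1) * Real.exp (-(a * (2 * n + 1)) * t) := fun t => by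
      rw [norm_mul, norm_div, norm_pow, norm_neg, norm_one, one_pow,
        Real.norm_of_nonneg (Real.exp_pos _).le, Real.norm_of_nonneg (by positivity)]
    simp_rw [this]
    rw [integral_const_mul, hexp]
    field_simp
  have hsum : Summable fun n : ℕ => ∫ t in Ioi (0:ℝ), ‖(-1) ^ n / (2 * n + 1) *
      Real.exp (-(a * (2 * n + 1)) * t)‖ := by
    simp_rw [hnorm]
    have hs : Summable fun n : ℕ => 1 / a * (1 / ((n + 1 : ℕ) : ℝ) ^ 2) :=
      ((summable_nat_add_iff 1).2 (Real.summable_one_div_nat_pow.2 one_lt_two)).mul_left _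
    refine hs.of_nonneg_of_le (fun n => by positivity) fun n => ?_
    rw [one_div_mul_one_div]
    push_cast
    gcongr
    linarith
  have h := hasSum_integral_of_summable_integral_norm hI hsum
  have hL : ∫ t in Ioi (0:ℝ), Real.arctan (Real.exp (-a * t)) =
      ∫ t in Ioi (0:ℝ), ∑' n : ℕ, (-1) ^ n / (2 * n + 1) *
        Real.exp (-(a * (2 * n + 1)) * t) := by
    refine setIntegral_congr_fun measurableSet_Ioi fun t ht => ?_
    have hlt : ‖Real.exp (-a * t)‖ < 1 := by
      rw [Real.norm_of_nonneg (Real.exp_pos _).le, Real.exp_lt_one_iff]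
      have := mul_pos ha ht
      linarith
    change Real.arctan (Real.exp (-a * t)) = ∑' n : ℕ, (-1) ^ n / (2 * n + 1) *
        Real.exp (-(a * (2 * n + 1)) * t)
    rw [← (Real.hasSum_arctan hlt).tsum_eq]
    refine tsum_congr fun n => ?_
    rw [← Real.exp_nat_mul, mul_div_right_comm]
    push_cast
    ring_nf
  rw [hL, ← h.tsum_eq, ← tsum_div_const]
  refine tsum_congr fun n => ?_
  rw [integral_const_mul, hexp]
  field_simp

lemma integrableOn_arctan_exp {a : ℝ} (ha : 0 < a) :
    IntegrableOn (fun t : ℝ => Real.arctan (Real.exp (-a * t))) (Ioi 0) := by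
  refine (integrableOn_exp_mul_Ioi (neg_lt_zero.2 ha) 0).mono'
    (Real.continuous_arctan.comp (by fun_prop)).aestronglyMeasurable (ae_of_all _ fun t => ?_)
  rw [Real.norm_of_nonneg (Real.arctan_nonneg.2 (Real.exp_pos _).le)]
  exact arctan_le_self (Real.exp_pos _).le

/-- The modular angle as a function of the period ratio. -/
noncomputable def modularAngle (t : ℝ) : ℝ := Real.arccos (coModulus (Real.exp (-π * t)))

lemma exp_neg_mul_lt_one {a t : ℝ} (ha : 0 < a) (ht : 0 < t) : Real.exp (-a * t) < 1 := by
  rw [Real.exp_lt_one_iff]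
  have := mul_pos ha ht
  linarith

lemma arctanSum_exp (a t : ℝ) (N : ℕ) : arctanSum (Real.exp (-a * t)) N =
    4 * ∑ k ∈ Finset.range N,
      (-1) ^ k * Real.arctan (Real.exp (-(a * (2 * k + 1)) * t)) := by
  have h : ∀ k : ℕ, Real.exp (-a * t) ^ (2 * k + 1) = Real.exp (-(a * (2 * k + 1)) * t) :=
    fun k => by
      rw [← Real.exp_nat_mul]
      push_cast
      ring_nf
  simp only [arctanSum, h]

lemma integral_arctanSum {a : ℝ} (ha : 0 < a) (N : ℕ) :
    ∫ t in Ioi (0:ℝ), arctanSum (Real.exp (-a * t)) N =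
      4 * (∑' n : ℕ, (-1 : ℝ) ^ n / (2 * (n : ℝ) + 1) ^ 2) / a *
        ∑ k ∈ Finset.range N, (-1 : ℝ) ^ k / (2 * k + 1) := by
  have hpos : ∀ k : ℕ, 0 < a * (2 * k + 1) := fun k => by positivity
  simp_rw [arctanSum_exp]
  rw [integral_const_mul, integral_finsetSum _ fun k _ =>
    (integrableOn_arctan_exp (hpos k)).const_mul _, Finset.mul_sum,
    Finset.mul_sum]
  refine Finset.sum_congr rfl fun k _ => ?_
  rw [integral_const_mul, integral_arctan_exp (hpos k)]
  field_simp

lemma tendsto_arctanSum_exp {t : ℝ} (ht : 0 < t) :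
    Tendsto (arctanSum (Real.exp (-(π / 2) * t))) atTop (𝓝 (modularAngle t)) := by
  have h := tendsto_arctanSum (Real.exp_pos (-(π / 2) * t))
    (exp_neg_mul_lt_one (by positivity) ht)
  rwa [← Real.exp_nat_mul, show ((2 : ℕ) : ℝ) * (-(π / 2) * t) = -π * t by push_cast; ring] at h

lemma continuous_arctanSum_exp (a : ℝ) (N : ℕ) :
    Continuous fun t => arctanSum (Real.exp (-a * t)) N := by
  unfold arctanSum
  refine continuous_const.mul (continuous_finsetSum _ fun k _ => continuous_const.mul ?_)
  exact Real.continuous_arctan.comp (by fun_prop)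

lemma arctanSum_exp_bound {a : ℝ} (ha : 0 < a) (N : ℕ) {t : ℝ} (ht : 0 < t) :
    ‖arctanSum (Real.exp (-a * t)) N‖ ≤ 4 * Real.exp (-a * t) := by
  have h0 := (Real.exp_pos (-a * t)).le
  have h1 := (exp_neg_mul_lt_one ha ht).le
  rw [Real.norm_of_nonneg (arctanSum_nonneg h0 h1 N)]
  exact (arctanSum_le h0 h1 N).trans (by linarith [arctan_le_self h0])

lemma integrableOn_modularAngle : IntegrableOn modularAngle (Ioi 0) := by
  have hlim : ∀ᵐ t ∂(volume.restrict (Ioi (0:ℝ))), Tendsto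
      (fun N => arctanSum (Real.exp (-(π / 2) * t)) N) atTop (𝓝 (modularAngle t)) :=
    (ae_restrict_iff' measurableSet_Ioi).2 (ae_of_all _ fun t ht => tendsto_arctanSum_exp ht)
  refine ((integrableOn_exp_mul_Ioi (neg_lt_zero.2 (by positivity : 0 < π / 2)) 0).const_mul
    4).mono' (aestronglyMeasurable_of_tendsto_ae atTop
      (fun N => (continuous_arctanSum_exp (π / 2) N).aestronglyMeasurable) hlim)
    ((ae_restrict_iff' measurableSet_Ioi).2 (ae_of_all _ fun t ht => ?_))
  exact le_of_tendsto' (tendsto_arctanSum_exp ht).norm fun N =>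
    arctanSum_exp_bound (by positivity) N ht

lemma integral_modularAngle :
    ∫ t in Ioi (0:ℝ), modularAngle t =
      2 * ∑' n : ℕ, (-1 : ℝ) ^ n / (2 * (n : ℝ) + 1) ^ 2 := by
  have ha : 0 < π / 2 := by positivity
  have h := tendsto_integral_of_dominated_convergence (μ := volume.restrict (Ioi (0:ℝ)))
    (F := fun N t => arctanSum (Real.exp (-(π / 2) * t)) N) (f := modularAngle)
    (fun t => 4 * Real.exp (-(π / 2) * t))
    (fun N => (continuous_arctanSum_exp _ N).aestronglyMeasurable)
    ((integrableOn_exp_mul_Ioi (neg_lt_zero.2 ha) 0).const_mul 4)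
    (fun N => (ae_restrict_iff' measurableSet_Ioi).2
      (ae_of_all _ fun t ht => arctanSum_exp_bound ha N ht))
    ((ae_restrict_iff' measurableSet_Ioi).2 (ae_of_all _ fun t ht => tendsto_arctanSum_exp ht))
  simp_rw [integral_arctanSum ha] at h
  rw [tendsto_nhds_unique h (Real.tendsto_sum_pi_div_four.const_mul _)]
  field_simp

end CatalanIntegral

end EllipticRatio

namespace EllipticRatio

section LayerCake

lemma cos_mem_Ioo {θ : ℝ} (hθ : θ ∈ Ioo 0 (π / 2)) : Real.cos θ ∈ Ioo (0:ℝ) 1 :=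
  ⟨Real.cos_pos_of_mem_Ioo ⟨by linarith [hθ.1, Real.pi_pos], hθ.2⟩, by
    have := Real.cos_lt_cos_of_nonneg_of_le_pi_div_two le_rfl hθ.2.le hθ.1
    rwa [Real.cos_zero] at this⟩

lemma periodRatio_pos {c : ℝ} (hc : c ∈ Ioo (0:ℝ) 1) : 0 < periodRatio c := by
  refine div_pos (EllK_pos hc.1.le hc.2) (EllK_pos (Real.sqrt_nonneg _) ?_)
  rw [Real.sqrt_lt' one_pos]
  nlinarith [hc.1]

lemma periodRatio_mono {a b : ℝ} (ha : a ∈ Ioo (0:ℝ) 1) (hb : b ∈ Ioo (0:ℝ) 1) (hab : a ≤ b) :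
    periodRatio a ≤ periodRatio b := by
  have hlt : √(1 - a ^ 2) < 1 := by
    rw [Real.sqrt_lt' one_pos]
    nlinarith [ha.1]
  have hle : √(1 - b ^ 2) ≤ √(1 - a ^ 2) := Real.sqrt_le_sqrt (by nlinarith [ha.1, hb.1])
  exact div_le_div₀ (EllK_pos hb.1.le hb.2).le (EllK_mono ha.1.le hab hb.2)
    (EllK_pos (Real.sqrt_nonneg _) (hle.trans_lt hlt)) (EllK_mono (Real.sqrt_nonneg _) hle hlt)

lemma antitoneOn_periodRatio_cos :
    AntitoneOn (fun θ => periodRatio (Real.cos θ)) (Ioo 0 (π / 2)) := fun x hx y hy hxy =>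
  periodRatio_mono (cos_mem_Ioo hy) (cos_mem_Ioo hx)
    (Real.cos_le_cos_of_nonneg_of_le_pi hx.1.le (by linarith [hy.2, Real.pi_pos]) hxy)

lemma modularAngle_mem {t : ℝ} (ht : 0 < t) : modularAngle t ∈ Ioo 0 (π / 2) := by
  have h0 := Real.exp_pos (-π * t)
  have h1 := exp_neg_mul_lt_one Real.pi_pos ht
  exact ⟨Real.arccos_pos.2 (coModulus_lt_one h0 h1),
    Real.arccos_lt_pi_div_two.2 (coModulus_pos h0 h1)⟩

lemma periodRatio_cos_modularAngle {t : ℝ} (ht : 0 < t) :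
    periodRatio (Real.cos (modularAngle t)) = t := by
  have h0 := Real.exp_pos (-π * t)
  have h1 := exp_neg_mul_lt_one Real.pi_pos ht
  rw [modularAngle, Real.cos_arccos (by linarith [coModulus_pos h0 h1]) (coModulus_lt_one h0 h1).le,
    periodRatio_coModulus h0 h1, Real.log_exp]
  field_simp

lemma lintegral_periodRatio_cos :
    ∫⁻ θ in Ioo 0 (π / 2), ENNReal.ofReal (periodRatio (Real.cos θ)) =
      ∫⁻ t in Ioi (0:ℝ), ENNReal.ofReal (modularAngle t) := by
  have hnn : 0 ≤ᵐ[volume.restrict (Ioo 0 (π / 2))] fun θ => periodRatio (Real.cos θ) :=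
    (ae_restrict_iff' measurableSet_Ioo).2
      (ae_of_all _ fun θ hθ => (periodRatio_pos (cos_mem_Ioo hθ)).le)
  have hm : AEMeasurable (fun θ => periodRatio (Real.cos θ)) (volume.restrict (Ioo 0 (π / 2))) :=
    aemeasurable_restrict_of_antitoneOn measurableSet_Ioo antitoneOn_periodRatio_cos
  refine le_antisymm ?_ ?_
  · rw [lintegral_eq_lintegral_meas_lt _ hnn hm]
    refine setLIntegral_mono' measurableSet_Ioi fun t ht => ?_
    rw [Measure.restrict_apply' measurableSet_Ioo]
    calc _ ≤ volume (Ioc 0 (modularAngle t)) := by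
          refine measure_mono fun θ hθ => ⟨hθ.2.1, ?_⟩
          by_contra! hlt
          have h := antitoneOn_periodRatio_cos (modularAngle_mem ht) hθ.2 hlt.le
          simp only [periodRatio_cos_modularAngle ht] at h
          exact absurd hθ.1 (not_lt.2 h)
      _ = _ := by rw [Real.volume_Ioc, sub_zero]
  · rw [lintegral_eq_lintegral_meas_le _ hnn hm]
    refine setLIntegral_mono' measurableSet_Ioi fun t ht => ?_
    rw [Measure.restrict_apply' measurableSet_Ioo]
    have hφ := modularAngle_mem ht
    calc _ = volume (Ioc 0 (modularAngle t)) := by rw [Real.volume_Ioc, sub_zero]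
      _ ≤ _ := by
          refine measure_mono fun θ hθ => ?_
          have hθ' : θ ∈ Ioo 0 (π / 2) := ⟨hθ.1, hθ.2.trans_lt hφ.2⟩
          refine ⟨?_, hθ'⟩
          have h := antitoneOn_periodRatio_cos hθ' hφ hθ.2
          simp only [periodRatio_cos_modularAngle ht] at h
          exact h

lemma integral_periodRatio_cos :
    ∫ θ in Ioo 0 (π / 2), periodRatio (Real.cos θ) =
      2 * ∑' n : ℕ, (-1 : ℝ) ^ n / (2 * (n : ℝ) + 1) ^ 2 := by
  have hm : AEMeasurable (fun θ => periodRatio (Real.cos θ)) (volume.restrict (Ioo 0 (π / 2))) :=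
    aemeasurable_restrict_of_antitoneOn measurableSet_Ioo antitoneOn_periodRatio_cos
  rw [integral_eq_lintegral_of_nonneg_ae ((ae_restrict_iff' measurableSet_Ioo).2
      (ae_of_all _ fun θ hθ => (periodRatio_pos (cos_mem_Ioo hθ)).le)) hm.aestronglyMeasurable,
    lintegral_periodRatio_cos, ← integral_modularAngle,
    integral_eq_lintegral_of_nonneg_ae ((ae_restrict_iff' measurableSet_Ioi).2
      (ae_of_all _ fun t ht => (modularAngle_mem ht).1.le))
      integrableOn_modularAngle.aestronglyMeasurable]

lemma image_sin_Ioo : Real.sin '' Ioo 0 (π / 2) = Ioo 0 1 := by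
  ext x
  constructor
  · rintro ⟨θ, hθ, rfl⟩
    refine ⟨Real.sin_pos_of_pos_of_lt_pi hθ.1 (by linarith [hθ.2, Real.pi_pos]), ?_⟩
    have h := Real.sin_lt_sin_of_lt_of_le_pi_div_two (by linarith [hθ.1, Real.pi_pos]) le_rfl hθ.2
    rwa [Real.sin_pi_div_two] at h
  · rintro ⟨h0, h1⟩
    exact ⟨Real.arcsin x, ⟨Real.arcsin_pos.2 h0, Real.arcsin_lt_pi_div_two.2 h1⟩,
      Real.sin_arcsin (by linarith) h1.le⟩

lemma sqrt_one_sub_sin_sq {θ : ℝ} (hθ : θ ∈ Ioo 0 (π / 2)) :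
    √(1 - Real.sin θ ^ 2) = Real.cos θ := by
  rw [← Real.cos_sq', Real.sqrt_sq (cos_mem_Ioo hθ).1.le]

lemma sqrt_one_sub_cos_sq {θ : ℝ} (hθ : θ ∈ Ioo 0 (π / 2)) :
    √(1 - Real.cos θ ^ 2) = Real.sin θ := by
  rw [← Real.sin_sq, Real.sqrt_sq
    (Real.sin_pos_of_pos_of_lt_pi hθ.1 (by linarith [hθ.2, Real.pi_pos])).le]

lemma integral_EllK'_div_eq :
    ∫ k in (0:ℝ)..(1:ℝ), EllK' k / (EllK k * √(1 - k ^ 2)) =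
      ∫ θ in Ioo 0 (π / 2), periodRatio (Real.cos θ) := by
  have hinj : InjOn Real.sin (Ioo 0 (π / 2)) :=
    Real.injOn_sin.mono fun θ hθ => mem_Icc.2 ⟨by linarith [hθ.1, Real.pi_pos], hθ.2.le⟩
  rw [intervalIntegral.integral_of_le zero_le_one, integral_Ioc_eq_integral_Ioo, ← image_sin_Ioo,
    integral_image_eq_integral_abs_deriv_smul measurableSet_Ioo
      (fun θ _ => (Real.hasDerivAt_sin θ).hasDerivWithinAt)
      hinj]
  refine setIntegral_congr_fun measurableSet_Ioo fun θ hθ => ?_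
  have hc := (cos_mem_Ioo hθ).1
  simp only [smul_eq_mul, EllK', periodRatio, sqrt_one_sub_sin_sq hθ, sqrt_one_sub_cos_sq hθ,
    abs_of_pos hc]
  field_simp

end LayerCake

end EllipticRatio

theorem stmt_7 :
    ∫ k in (0:ℝ)..(1:ℝ), EllK' k / (EllK k * Real.sqrt (1 - k^2))
      = 2 * ∑' n : ℕ, (-1 : ℝ)^n / (2 * (n : ℝ) + 1)^2 := by
  rw [EllipticRatio.integral_EllK'_div_eq, EllipticRatio.integral_periodRatio_cos]
end

section
/- ∫₀¹ k K(k)² dk = (7/4)ζ(3). -/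
open scoped Real
open MeasureTheory

namespace Polynomial

/-- The shifted Legendre polynomial with real coefficients. -/
noncomputable def realShiftedLegendre (n : ℕ) : ℝ[X] :=
  (shiftedLegendre n).map (Int.castRingHom ℝ)

lemma coeff_realShiftedLegendre (n k : ℕ) :
    (realShiftedLegendre n).coeff k = (-1) ^ k * n.choose k * (n + k).choose n := by
  simp [realShiftedLegendre, coeff_shiftedLegendre]

lemma degree_realShiftedLegendre (n : ℕ) : (realShiftedLegendre n).degree = n := by
  rw [realShiftedLegendre, degree_map_eq_of_injective (RingHom.injective_int _),
    degree_shiftedLegendre]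

lemma eval_one_realShiftedLegendre (n : ℕ) : (realShiftedLegendre n).eval 1 = (-1) ^ n := by
  have h := shiftedLegendre_eval_symm n (1 : ℝ)
  have h0 : aeval (0 : ℝ) (shiftedLegendre n) = 1 := by
    rw [← coeff_zero_eq_aeval_zero', coeff_shiftedLegendre]; simp
  rw [sub_self, h0, mul_one] at h
  rw [realShiftedLegendre, eval_map, ← h, aeval_def]
  rfl

/-- The shifted Legendre differential equation. -/
lemma derivative_X_mul_one_sub_X_mul_derivative_realShiftedLegendre (n : ℕ) :
    derivative (X * (1 - X) * derivative (realShiftedLegendre n)) =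
      C (-(n * (n + 1) : ℝ)) * realShiftedLegendre n := by
  set p := realShiftedLegendre n with hp
  have hsplit : X * (1 - X) * derivative p = X * derivative p - X * (X * derivative p) := by ring
  have hrec (k : ℕ) : ((k : ℝ) + 1) ^ 2 * p.coeff (k + 1) =
      -((n : ℝ) - k) * (n + k + 1) * p.coeff k := by
    simp only [hp, coeff_realShiftedLegendre]
    have h1 : (n.choose (k + 1) : ℝ) * (k + 1) = n.choose k * (n - k) := by
      rcases le_or_gt k n with h | h
      · have := Nat.choose_succ_right_eq n k
        rw [← Nat.cast_sub h]; exact_mod_cast this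
      · simp [Nat.choose_eq_zero_of_lt h, Nat.choose_eq_zero_of_lt (h.trans (Nat.lt_succ_self k))]
    have h2 : ((n + (k + 1)).choose n : ℝ) * (k + 1) = (n + k).choose n * (n + k + 1) := by
      have := Nat.add_one_mul_choose_eq (n + k) k
      rw [Nat.choose_symm_add, Nat.choose_symm_add, show n + (k + 1) = n + k + 1 from rfl]
      have : (((n + k : ℕ) : ℝ) + 1) * (n + k).choose k
        = (n + k + 1).choose (k + 1) * ((k : ℝ) + 1) := by exact_mod_cast this
      push_cast at this
      linarith
    calc _ = -(-1) ^ k * ((n.choose (k + 1) : ℝ) * (k + 1)) *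
          (((n + (k + 1)).choose n : ℝ) * (k + 1)) := by ring
      _ = _ := by rw [h1, h2]; ring
  ext k
  rw [hsplit, coeff_derivative, coeff_sub, coeff_X_mul, coeff_X_mul, coeff_C_mul, coeff_derivative]
  rcases k with _ | k
  · have := hrec 0
    simp only [mul_coeff_zero, coeff_X_zero]
    push_cast at this ⊢
    linarith
  · have := hrec (k + 1)
    rw [coeff_X_mul, coeff_derivative]
    push_cast at this ⊢
    linarith

lemma integral_derivative_eval (p : ℝ[X]) :
    ∫ x in (0 : ℝ)..1, (derivative p).eval x = p.eval 1 - p.eval 0 :=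
  intervalIntegral.integral_eq_sub_of_hasDerivAt (fun x _ ↦ p.hasDerivAt x)
    ((derivative p).continuous.intervalIntegrable _ _)

lemma intervalIntegrable_eval (p : ℝ[X]) (a b : ℝ) :
    IntervalIntegrable (fun x ↦ p.eval x) volume a b :=
  p.continuous.intervalIntegrable _ _

/-- Integration of polynomials over `[0, 1]`, as a linear functional. -/
noncomputable def unitIntegral : ℝ[X] →ₗ[ℝ] ℝ where
  toFun p := ∫ x in (0 : ℝ)..1, p.eval x
  map_add' p q := by
    simp only [eval_add]
    exact intervalIntegral.integral_add (intervalIntegrable_eval _ _ _)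
      (intervalIntegrable_eval _ _ _)
  map_smul' c p := by simp

lemma unitIntegral_apply (p : ℝ[X]) : unitIntegral p = ∫ x in (0 : ℝ)..1, p.eval x := rfl

lemma unitIntegral_derivative (p : ℝ[X]) : unitIntegral (derivative p) = p.eval 1 - p.eval 0 :=
  integral_derivative_eval p

lemma unitIntegral_realShiftedLegendre_mul_of_ne {m n : ℕ} (h : m ≠ n) :
    unitIntegral (realShiftedLegendre m * realShiftedLegendre n) = 0 := by
  set p := realShiftedLegendre m with hp
  set q := realShiftedLegendre n with hq
  have hd : derivative ((X * (1 - X) * derivative p) * q - (X * (1 - X) * derivative q) * p) =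
      ((n * (n + 1) : ℝ) - m * (m + 1)) • (p * q) := by
    rw [derivative_sub, derivative_mul, derivative_mul (f := _ * derivative q), hp, hq,
      derivative_X_mul_one_sub_X_mul_derivative_realShiftedLegendre,
      derivative_X_mul_one_sub_X_mul_derivative_realShiftedLegendre, ← hp, ← hq, smul_eq_C_mul]
    simp only [C_neg, C_sub]
    ring
  have hI := unitIntegral_derivative
    ((X * (1 - X) * derivative p) * q - (X * (1 - X) * derivative q) * p)
  rw [hd, map_smul] at hI
  simp only [eval_sub, eval_mul, eval_X, eval_one, sub_self, mul_zero, zero_mul, smul_eq_mul] at hI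
  refine (mul_eq_zero.mp hI).resolve_left fun h0 ↦ h ?_
  have h1 : ((n : ℝ) - m) * (n + m + 1) = 0 := by linarith
  rcases mul_eq_zero.mp h1 with h2 | h2
  · exact_mod_cast (sub_eq_zero.mp h2).symm
  · have : (0 : ℝ) < n + m + 1 := by positivity
    exact absurd h2 this.ne'

/-- The shifted Legendre polynomials as a polynomial sequence. -/
noncomputable def realShiftedLegendreSequence : Sequence ℝ where
  elems' := realShiftedLegendre
  degree_eq' := degree_realShiftedLegendre

lemma isUnit_leadingCoeff_realShiftedLegendreSequence (n : ℕ) :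
    IsUnit (realShiftedLegendreSequence n).leadingCoeff :=
  (leadingCoeff_ne_zero.mpr (realShiftedLegendreSequence.ne_zero n)).isUnit

lemma span_realShiftedLegendre : Submodule.span ℝ (Set.range realShiftedLegendre) = ⊤ :=
  realShiftedLegendreSequence.span isUnit_leadingCoeff_realShiftedLegendreSequence

lemma unitIntegral_realShiftedLegendre_mul_of_degree_lt {n : ℕ} {q : ℝ[X]} (hq : q.degree < n) :
    unitIntegral (realShiftedLegendre n * q) = 0 := by
  have hmem : q ∈ Submodule.span ℝ (realShiftedLegendreSequence '' Set.Iio n) := by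
    rw [realShiftedLegendreSequence.span_degreeLT
      fun i _ ↦ isUnit_leadingCoeff_realShiftedLegendreSequence i]
    exact mem_degreeLT.mpr hq
  have hle : Submodule.span ℝ (realShiftedLegendreSequence '' Set.Iio n) ≤
      LinearMap.ker (unitIntegral ∘ₗ LinearMap.mulLeft ℝ (realShiftedLegendre n)) := by
    rw [Submodule.span_le]
    rintro _ ⟨m, hm, rfl⟩
    exact unitIntegral_realShiftedLegendre_mul_of_ne (ne_of_gt hm)
  exact hle hmem

lemma unitIntegral_realShiftedLegendre_mul_self (n : ℕ) :
    unitIntegral (realShiftedLegendre n * realShiftedLegendre n) = 1 / (2 * n + 1) := by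
  set p := realShiftedLegendre n with hp
  have hlt : (X * derivative p - (n : ℝ) • p).degree < (n : WithBot ℕ) := by
    rw [degree_lt_iff_coeff_zero]
    intro m hm
    rw [coeff_sub, coeff_smul, smul_eq_mul]
    have hc : (X * derivative p).coeff m = m * p.coeff m := by
      rcases m with _ | m
      · simp
      · rw [coeff_X_mul, coeff_derivative]; push_cast; ring
    rw [hc]
    rcases hm.eq_or_lt with rfl | hm
    · ring
    · rw [coeff_eq_zero_of_degree_lt (n := m) (by
        rw [hp, degree_realShiftedLegendre]; exact_mod_cast hm)]
      ring
  have h0 := unitIntegral_realShiftedLegendre_mul_of_degree_lt hlt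
  rw [← hp, mul_sub, map_sub, mul_smul_comm, map_smul, smul_eq_mul] at h0
  have h1 := unitIntegral_derivative (X * (p * p))
  have hd : derivative (X * (p * p)) = p * p + (2 : ℝ) • (p * (X * derivative p)) := by
    rw [derivative_mul, derivative_mul, derivative_X, smul_eq_C_mul, C_ofNat]; ring
  rw [hd, map_add, map_smul] at h1
  simp only [eval_mul, eval_X, hp, eval_one_realShiftedLegendre, smul_eq_mul] at h1
  rw [← hp, ← pow_add, Even.neg_one_pow ⟨n, rfl⟩] at h1
  rw [eq_div_iff (by positivity)]
  linarith

end Polynomial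

section Parseval

open Polynomial

/-- The class of a polynomial in `L²([0, 1])`. -/
noncomputable def polynomialToL2 : ℝ[X] →ₗ[ℝ] Lp ℝ 2 (volume : Measure unitInterval) :=
  (ContinuousMap.toLp 2 volume ℝ : C(unitInterval, ℝ) →L[ℝ] _).toLinearMap ∘ₗ
    (toContinuousMapOnAlgHom unitInterval).toLinearMap

lemma polynomialToL2_apply (p : ℝ[X]) :
    polynomialToL2 p = ContinuousMap.toLp 2 volume ℝ (p.toContinuousMapOn unitInterval) := rfl

lemma integral_unitInterval_coe (f : ℝ → ℝ) :
    ∫ x : unitInterval, f x = ∫ x in (0 : ℝ)..1, f x := by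
  rw [unitInterval.measurePreserving_coe.integral_comp unitInterval.measurableEmbedding_coe f,
    intervalIntegral.integral_of_le zero_le_one, ← integral_Icc_eq_integral_Ioc]

lemma inner_polynomialToL2 (p q : ℝ[X]) :
    inner ℝ (polynomialToL2 p) (polynomialToL2 q) = unitIntegral (p * q) := by
  rw [polynomialToL2_apply, polynomialToL2_apply, ContinuousMap.inner_toLp, unitIntegral_apply,
    ← integral_unitInterval_coe]
  exact integral_congr_ae (.of_forall fun x ↦ by simp [mul_comm])

lemma denseRange_polynomialToL2 : DenseRange polynomialToL2 := by
  have h : DenseRange (toContinuousMapOnAlgHom (R := ℝ) unitInterval) := by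
    intro f
    have := continuousMap_mem_polynomialFunctions_closure 0 1 f
    rw [← SetLike.mem_coe, Subalgebra.topologicalClosure_coe, polynomialFunctions_coe] at this
    exact this
  exact (ContinuousMap.toLp_denseRange ℝ volume ℝ (by simp)).comp h (ContinuousLinearMap.continuous _)

/-- Orthonormal multiples of the shifted Legendre polynomials in `L²([0, 1])`. -/
noncomputable def legendreL2 (n : ℕ) : Lp ℝ 2 (volume : Measure unitInterval) :=
  √(2 * n + 1) • polynomialToL2 (realShiftedLegendre n)

lemma orthonormal_legendreL2 : Orthonormal ℝ legendreL2 := by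
  rw [orthonormal_iff_ite]
  intro m n
  rw [legendreL2, legendreL2, inner_smul_left, inner_smul_right, inner_polynomialToL2]
  split_ifs with h
  · subst h
    have h0 : (0 : ℝ) < 2 * m + 1 := by positivity
    rw [unitIntegral_realShiftedLegendre_mul_self, ← mul_assoc, conj_trivial,
      Real.mul_self_sqrt h0.le, mul_one_div_cancel h0.ne']
  · rw [unitIntegral_realShiftedLegendre_mul_of_ne h, mul_zero, mul_zero]

lemma topologicalClosure_span_legendreL2 :
    ⊤ ≤ (Submodule.span ℝ (Set.range legendreL2)).topologicalClosure := by
  have h : LinearMap.range polynomialToL2 ≤ Submodule.span ℝ (Set.range legendreL2) := by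
    rw [LinearMap.range_eq_map, ← span_realShiftedLegendre, Submodule.map_span, Submodule.span_le]
    rintro _ ⟨_, ⟨n, rfl⟩, rfl⟩
    have h0 : √(2 * (n : ℝ) + 1) ≠ 0 := (Real.sqrt_pos.mpr (by positivity)).ne'
    have : polynomialToL2 (realShiftedLegendre n) = (√(2 * (n : ℝ) + 1))⁻¹ • legendreL2 n := by
      rw [legendreL2, smul_smul, inv_mul_cancel₀ h0, one_smul]
    rw [this]
    exact Submodule.smul_mem _ _ (Submodule.subset_span ⟨n, rfl⟩)
  intro x _
  exact closure_mono h (denseRange_polynomialToL2 x)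

/-- Parseval's identity for shifted Legendre expansions on `[0, 1]`. -/
theorem hasSum_sq_integral_mul_realShiftedLegendre {f : ℝ → ℝ}
    (hf : MemLp f 2 (volume.restrict (Set.Icc 0 1))) :
    HasSum (fun n : ℕ ↦ (2 * n + 1 : ℝ) *
      (∫ x in (0 : ℝ)..1, f x * (realShiftedLegendre n).eval x) ^ 2)
      (∫ x in (0 : ℝ)..1, f x ^ 2) := by
  have hg : MemLp (fun x : unitInterval ↦ f x) 2 volume :=
    hf.comp_measurePreserving unitInterval.measurePreserving_coe
  let b := HilbertBasis.mk orthonormal_legendreL2 topologicalClosure_span_legendreL2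
  have hinner : inner ℝ (hg.toLp _) (hg.toLp _) = ∫ x in (0 : ℝ)..1, f x ^ 2 := by
    rw [L2.inner_def, ← integral_unitInterval_coe]
    refine integral_congr_ae ?_
    filter_upwards [hg.coeFn_toLp] with x hx
    rw [hx]
    simp [sq]
  have hsum := b.hasSum_inner_mul_inner (hg.toLp _) (hg.toLp _)
  rw [hinner] at hsum
  refine (congrArg (HasSum · _) (funext fun n ↦ ?_)).mp hsum
  have hb : b n = legendreL2 n := by simp [b]
  have hi : inner ℝ (hg.toLp _) (polynomialToL2 (realShiftedLegendre n)) =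
      ∫ x in (0 : ℝ)..1, f x * (realShiftedLegendre n).eval x := by
    rw [L2.inner_def, ← integral_unitInterval_coe]
    refine integral_congr_ae ?_
    filter_upwards [hg.coeFn_toLp, ContinuousMap.coeFn_toLp (p := 2) (𝕜 := ℝ) volume
      ((realShiftedLegendre n).toContinuousMapOn unitInterval)] with x hx hy
    rw [hx, polynomialToL2_apply, hy]
    simp [mul_comm]
  rw [hb, real_inner_comm, ← sq, legendreL2, inner_smul_left, real_inner_comm, hi, mul_pow,
    conj_trivial, Real.sq_sqrt (by positivity)]

end Parseval

section CompleteElliptic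

/-- The integrand of the complete elliptic integral of the first kind with parameter `m = k ^ 2`. -/
noncomputable def ellipticKernel (m x : ℝ) : ℝ := 1 / √((1 - x ^ 2) * (1 - m * x ^ 2))

/-- The complete elliptic integral of the first kind as a function of the parameter `m = k ^ 2`. -/
noncomputable def ellipticKParam (m : ℝ) : ℝ := ∫ x in (0 : ℝ)..1, ellipticKernel m x

lemma EllK_eq_ellipticKParam (k : ℝ) : EllK k = ellipticKParam (k ^ 2) := rfl

lemma integral_zero_one_eq_setIntegral_Ioo (f : ℝ → ℝ) :
    ∫ x in (0 : ℝ)..1, f x = ∫ x in Set.Ioo (0 : ℝ) 1, f x := by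
  rw [intervalIntegral.integral_of_le zero_le_one, integral_Ioc_eq_integral_Ioo]

lemma ellipticKernel_nonneg (m x : ℝ) : 0 ≤ ellipticKernel m x := by
  unfold ellipticKernel; positivity

lemma ellipticKernel_le {m x : ℝ} (hm : m ∈ Set.Ioo (0 : ℝ) 1) (hx : x ∈ Set.Ioo (0 : ℝ) 1) :
    ellipticKernel m x ≤ (1 - m) ^ (-(1 / 4) : ℝ) * (1 - x) ^ (-(3 / 4) : ℝ) := by
  obtain ⟨hm0, hm1⟩ := hm
  obtain ⟨hx0, hx1⟩ := hx
  have ha : 0 < 1 - m := by linarith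
  have hb : 0 < 1 - x := by linarith
  have hx2 : x ^ 2 ≤ x := by nlinarith
  have hbound : (1 - m) ^ (1 / 4 : ℝ) * (1 - x) ^ (3 / 4 : ℝ) ≤
      √((1 - x ^ 2) * (1 - m * x ^ 2)) := by
    apply Real.le_sqrt_of_sq_le
    have h1 : ((1 - m) ^ (1 / 4 : ℝ)) ^ 2 = √(1 - m) := by
      rw [← Real.rpow_natCast, ← Real.rpow_mul ha.le, Real.sqrt_eq_rpow]; norm_num
    have h2 : ((1 - x) ^ (3 / 4 : ℝ)) ^ 2 = (1 - x) * √(1 - x) := by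
      rw [← Real.rpow_natCast, ← Real.rpow_mul hb.le, Real.sqrt_eq_rpow,
        ← Real.rpow_one_add' hb.le (by norm_num)]
      norm_num
    have h3 : √(1 - m) ≤ √(1 - m * x ^ 2) := Real.sqrt_le_sqrt (by nlinarith)
    have h4 : √(1 - x) ≤ √(1 - m * x ^ 2) := Real.sqrt_le_sqrt (by nlinarith)
    have h5 : √(1 - m * x ^ 2) * √(1 - m * x ^ 2) = 1 - m * x ^ 2 :=
      Real.mul_self_sqrt (by nlinarith)
    calc _ = (1 - x) * (√(1 - x) * √(1 - m)) := by rw [mul_pow, h1, h2]; ring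
      _ ≤ (1 - x ^ 2) * (√(1 - m * x ^ 2) * √(1 - m * x ^ 2)) := by gcongr; nlinarith
      _ = _ := by rw [h5]
  rw [Real.rpow_neg ha.le, Real.rpow_neg hb.le, ← mul_inv, ellipticKernel, one_div]
  exact inv_anti₀ (by positivity) hbound

lemma integrableOn_one_sub_rpow {r : ℝ} (hr : -1 < r) :
    IntegrableOn (fun x : ℝ ↦ (1 - x) ^ r) (Set.Ioo 0 1) := by
  have h := (intervalIntegral.intervalIntegrable_rpow' (a := 1) (b := 0) hr).comp_sub_left 1
  simp only [sub_self, sub_zero] at h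
  exact (intervalIntegrable_iff_integrableOn_Ioo_of_le zero_le_one).mp h

lemma measurable_ellipticKernel :
    Measurable (Function.uncurry ellipticKernel) := by
  unfold ellipticKernel Function.uncurry
  fun_prop

lemma integrable_ellipticKernel :
    Integrable (Function.uncurry ellipticKernel)
      ((volume.restrict (Set.Ioo (0 : ℝ) 1)).prod (volume.restrict (Set.Ioo (0 : ℝ) 1))) := by
  have h : Integrable (fun z : ℝ × ℝ ↦ (1 - z.1) ^ (-(1 / 4) : ℝ) * (1 - z.2) ^ (-(3 / 4) : ℝ))
      ((volume.restrict (Set.Ioo (0 : ℝ) 1)).prod (volume.restrict (Set.Ioo (0 : ℝ) 1))) :=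
    (integrableOn_one_sub_rpow (by norm_num)).mul_prod (integrableOn_one_sub_rpow (by norm_num))
  refine h.mono' measurable_ellipticKernel.aestronglyMeasurable ?_
  rw [Measure.prod_restrict]
  refine (ae_restrict_mem (measurableSet_Ioo.prod measurableSet_Ioo)).mono fun z hz ↦ ?_
  rw [Function.uncurry, Real.norm_of_nonneg (ellipticKernel_nonneg _ _)]
  exact ellipticKernel_le hz.1 hz.2

lemma ellipticKParam_nonneg (m : ℝ) : 0 ≤ ellipticKParam m :=
  intervalIntegral.integral_nonneg zero_le_one fun x _ ↦ ellipticKernel_nonneg m x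

lemma stronglyMeasurable_ellipticKParam : StronglyMeasurable ellipticKParam := by
  have : ellipticKParam = fun m ↦ ∫ x in Set.Ioo (0 : ℝ) 1, ellipticKernel m x :=
    funext fun m ↦ integral_zero_one_eq_setIntegral_Ioo _
  rw [this]
  exact measurable_ellipticKernel.stronglyMeasurable.integral_prod_right

lemma ellipticKParam_le {m : ℝ} (hm : m ∈ Set.Ioo (0 : ℝ) 1) :
    ellipticKParam m ≤
      (1 - m) ^ (-(1 / 4) : ℝ) * ∫ x in Set.Ioo (0 : ℝ) 1, (1 - x) ^ (-(3 / 4) : ℝ) := by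
  rw [ellipticKParam, integral_zero_one_eq_setIntegral_Ioo, ← integral_const_mul]
  refine integral_mono_of_nonneg (.of_forall fun x ↦ ellipticKernel_nonneg m x)
    ((integrableOn_one_sub_rpow (by norm_num)).const_mul _) ?_
  exact (ae_restrict_mem measurableSet_Ioo).mono fun x hx ↦ ellipticKernel_le hm hx

lemma memLp_ellipticKParam : MemLp ellipticKParam 2 (volume.restrict (Set.Icc 0 1)) := by
  rw [← Measure.restrict_congr_set Ioo_ae_eq_Icc,
    memLp_two_iff_integrable_sq stronglyMeasurable_ellipticKParam.aestronglyMeasurable]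
  set c := ∫ x in Set.Ioo (0 : ℝ) 1, (1 - x) ^ (-(3 / 4) : ℝ)
  refine Integrable.mono' ((integrableOn_one_sub_rpow (r := -(1 / 2)) (by norm_num)).mul_const
    (c ^ 2)) (stronglyMeasurable_ellipticKParam.pow 2).aestronglyMeasurable ?_
  refine (ae_restrict_mem measurableSet_Ioo).mono fun m hm ↦ ?_
  have ha : 0 ≤ 1 - m := by linarith [hm.2]
  rw [Real.norm_of_nonneg (sq_nonneg _)]
  calc ellipticKParam m ^ 2 ≤ ((1 - m) ^ (-(1 / 4) : ℝ) * c) ^ 2 :=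
        pow_le_pow_left₀ (ellipticKParam_nonneg m) (ellipticKParam_le hm) 2
    _ = _ := by
        rw [mul_pow, ← Real.rpow_natCast, ← Real.rpow_mul ha]; norm_num

lemma intervalIntegrable_ellipticKParam : IntervalIntegrable ellipticKParam volume 0 1 :=
  (intervalIntegrable_iff_integrableOn_Icc_of_le zero_le_one).mpr
    (memLp_ellipticKParam.integrable one_le_two)

/-- The integral of `u ^ j / √(1 - u)` from `0` to `s`. -/
noncomputable def incompleteMoment (j : ℕ) (s : ℝ) : ℝ := ∫ u in (0 : ℝ)..s, u ^ j / √(1 - u)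

lemma continuousOn_pow_div_sqrt (j : ℕ) :
    ContinuousOn (fun u : ℝ ↦ u ^ j / √(1 - u)) (Set.Iio 1) := by
  refine ContinuousOn.div (by fun_prop) (by fun_prop) fun u hu ↦ ?_
  exact (Real.sqrt_pos.mpr (sub_pos.mpr hu)).ne'

lemma intervalIntegrable_pow_div_sqrt (j : ℕ) {s : ℝ} (hs : s < 1) :
    IntervalIntegrable (fun u : ℝ ↦ u ^ j / √(1 - u)) volume 0 s :=
  ((continuousOn_pow_div_sqrt j).mono fun _ hu ↦
    hu.2.trans_lt (max_lt one_pos hs)).intervalIntegrable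

lemma hasDerivAt_incompleteMoment (j : ℕ) {s : ℝ} (hs : s < 1) :
    HasDerivAt (incompleteMoment j) (s ^ j / √(1 - s)) s :=
  intervalIntegral.integral_hasDerivAt_right (intervalIntegrable_pow_div_sqrt j hs)
    ((continuousOn_pow_div_sqrt j).stronglyMeasurableAtFilter isOpen_Iio s hs)
    ((continuousOn_pow_div_sqrt j).continuousAt (Iio_mem_nhds hs))

lemma hasDerivAt_sqrt_one_sub {u : ℝ} (hu : u < 1) :
    HasDerivAt (fun u : ℝ ↦ √(1 - u)) (-1 / (2 * √(1 - u))) u :=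
  ((hasDerivAt_id u).const_sub 1).sqrt (sub_pos.mpr hu).ne'

lemma incompleteMoment_zero {s : ℝ} (hs : s < 1) :
    incompleteMoment 0 s = 2 * (1 - √(1 - s)) := by
  have h (u) (hu : u ∈ Set.uIcc 0 s) :
      HasDerivAt (fun u : ℝ ↦ -2 * √(1 - u)) (u ^ 0 / √(1 - u)) u := by
    have hu1 : u < 1 := hu.2.trans_lt (max_lt one_pos hs)
    have h0 := (Real.sqrt_pos.mpr (sub_pos.mpr hu1)).ne'
    refine ((hasDerivAt_sqrt_one_sub hu1).const_mul (-2)).congr_deriv ?_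
    field_simp
  rw [incompleteMoment, intervalIntegral.integral_eq_sub_of_hasDerivAt h
    (intervalIntegrable_pow_div_sqrt 0 hs)]
  simp
  ring

lemma incompleteMoment_succ (j : ℕ) {s : ℝ} (hs : s < 1) :
    (j + 3 / 2) * incompleteMoment (j + 1) s =
      (j + 1) * incompleteMoment j s - s ^ (j + 1) * √(1 - s) := by
  have h (u) (hu : u ∈ Set.uIcc 0 s) : HasDerivAt (fun u : ℝ ↦ u ^ (j + 1) * √(1 - u))
      ((j + 1) * (u ^ j / √(1 - u)) - (j + 3 / 2) * (u ^ (j + 1) / √(1 - u))) u := by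
    have hu1 : u < 1 := hu.2.trans_lt (max_lt one_pos hs)
    have h0 := Real.sqrt_pos.mpr (sub_pos.mpr hu1)
    refine ((hasDerivAt_pow (j + 1) u).mul (hasDerivAt_sqrt_one_sub hu1)).congr_deriv ?_
    have h2 : √(1 - u) ^ 2 = 1 - u := Real.sq_sqrt (sub_pos.mpr hu1).le
    field_simp
    rw [h2]
    push_cast
    ring
  have hI := intervalIntegral.integral_eq_sub_of_hasDerivAt h
    (((intervalIntegrable_pow_div_sqrt j hs).const_mul _).sub
      ((intervalIntegrable_pow_div_sqrt (j + 1) hs).const_mul _))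
  rw [intervalIntegral.integral_sub ((intervalIntegrable_pow_div_sqrt j hs).const_mul _)
    ((intervalIntegrable_pow_div_sqrt (j + 1) hs).const_mul _),
    intervalIntegral.integral_const_mul, intervalIntegral.integral_const_mul] at hI
  simp only [incompleteMoment]
  simp at hI
  linarith

lemma pow_div_le_incompleteMoment (j : ℕ) {s : ℝ} (hs0 : 0 ≤ s) (hs : s < 1) :
    s ^ (j + 1) / (j + 1) ≤ incompleteMoment j s := by
  have h : ∫ u in (0 : ℝ)..s, u ^ j = s ^ (j + 1) / (j + 1) := by simp [integral_pow]
  rw [← h]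
  refine intervalIntegral.integral_mono_on hs0 (by simp)
    (intervalIntegrable_pow_div_sqrt j hs) fun u hu ↦ ?_
  have h0 : 0 < √(1 - u) := Real.sqrt_pos.mpr (by linarith [hu.2])
  rw [le_div_iff₀ h0]
  exact mul_le_of_le_one_right (pow_nonneg hu.1 _) (Real.sqrt_le_one.mpr (by linarith [hu.1]))

lemma sqrt_mul_incompleteMoment_le (j : ℕ) {s : ℝ} (hs0 : 0 ≤ s) (hs : s < 1) :
    √(1 - s) * incompleteMoment j s ≤ s ^ (j + 1) / (j + 1) := by
  have h : ∫ u in (0 : ℝ)..s, u ^ j = s ^ (j + 1) / (j + 1) := by simp [integral_pow]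
  rw [← h, incompleteMoment, ← intervalIntegral.integral_const_mul]
  refine intervalIntegral.integral_mono_on hs0
    ((intervalIntegrable_pow_div_sqrt j hs).const_mul _) (by simp) fun u hu ↦ ?_
  have h0 : 0 < √(1 - u) := Real.sqrt_pos.mpr (by linarith [hu.2])
  rw [mul_div_left_comm]
  exact mul_le_of_le_one_right (pow_nonneg hu.1 _)
    ((div_le_one h0).mpr (Real.sqrt_le_sqrt (by linarith [hu.2])))

lemma incompleteMoment_le_two (j : ℕ) {s : ℝ} (hs0 : 0 ≤ s) (hs : s < 1) :
    incompleteMoment j s ≤ 2 := by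
  have h : incompleteMoment j s ≤ incompleteMoment 0 s := by
    refine intervalIntegral.integral_mono_on hs0 (intervalIntegrable_pow_div_sqrt j hs)
      (intervalIntegrable_pow_div_sqrt 0 hs) fun u hu ↦ ?_
    rw [pow_zero]
    gcongr
    exact pow_le_one₀ hu.1 (by linarith [hu.2])
  rw [incompleteMoment_zero hs] at h
  linarith [Real.sqrt_nonneg (1 - s)]

lemma integral_pow_mul_ellipticKernel (j : ℕ) {x : ℝ} (hx : x ∈ Set.Ioo (0 : ℝ) 1) :
    ∫ m in (0 : ℝ)..1, m ^ j * ellipticKernel m x =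
      incompleteMoment j (x ^ 2) / (x ^ (2 * j + 2) * √(1 - x ^ 2)) := by
  have hx0 : x ≠ 0 := hx.1.ne'
  have hx2 : 0 < 1 - x ^ 2 := by nlinarith [hx.1, hx.2]
  have h (m : ℝ) : m ^ j * ellipticKernel m x =
      (1 / (x ^ (2 * j) * √(1 - x ^ 2))) * ((m * x ^ 2) ^ j / √(1 - m * x ^ 2)) := by
    rw [ellipticKernel, Real.sqrt_mul hx2.le, mul_pow, ← pow_mul]
    field_simp
  simp_rw [h]
  rw [intervalIntegral.integral_const_mul, intervalIntegral.integral_comp_mul_right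
    (fun u ↦ u ^ j / √(1 - u)) (pow_ne_zero 2 hx0), zero_mul, one_mul, incompleteMoment,
    smul_eq_mul, pow_add]
  field_simp

lemma integrable_pow_mul_ellipticKernel (j : ℕ) :
    Integrable (Function.uncurry fun m x ↦ m ^ j * ellipticKernel m x)
      ((volume.restrict (Set.Ioo (0 : ℝ) 1)).prod (volume.restrict (Set.Ioo (0 : ℝ) 1))) := by
  refine integrable_ellipticKernel.mono
    ((measurable_fst.pow_const j).mul measurable_ellipticKernel).aestronglyMeasurable ?_
  rw [Measure.prod_restrict]
  refine (ae_restrict_mem (measurableSet_Ioo.prod measurableSet_Ioo)).mono fun z hz ↦ ?_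
  rw [Function.uncurry, Function.uncurry, norm_mul, Real.norm_of_nonneg (pow_nonneg hz.1.1.le j)]
  exact mul_le_of_le_one_left (norm_nonneg _) (pow_le_one₀ hz.1.1.le hz.1.2.le)

lemma intervalIntegrable_incompleteMoment_div (j : ℕ) :
    IntervalIntegrable (fun x : ℝ ↦ incompleteMoment j (x ^ 2) / (x ^ (2 * j + 2) * √(1 - x ^ 2)))
      volume 0 1 := by
  rw [intervalIntegrable_iff_integrableOn_Ioo_of_le zero_le_one]
  refine (integrable_pow_mul_ellipticKernel j).integral_prod_right.congr ?_
  refine (ae_restrict_mem measurableSet_Ioo).mono fun x hx ↦ ?_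
  exact ((integral_pow_mul_ellipticKernel j hx).symm.trans
    (integral_zero_one_eq_setIntegral_Ioo _)).symm

lemma integral_pow_mul_ellipticKParam (j : ℕ) :
    ∫ m in (0 : ℝ)..1, m ^ j * ellipticKParam m =
      ∫ x in (0 : ℝ)..1, incompleteMoment j (x ^ 2) / (x ^ (2 * j + 2) * √(1 - x ^ 2)) := by
  have h (m : ℝ) : m ^ j * ellipticKParam m =
      ∫ x in Set.Ioo (0 : ℝ) 1, m ^ j * ellipticKernel m x := by
    rw [integral_const_mul, ellipticKParam, integral_zero_one_eq_setIntegral_Ioo]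
  simp_rw [h]
  rw [integral_zero_one_eq_setIntegral_Ioo, integral_zero_one_eq_setIntegral_Ioo,
    integral_integral_swap (integrable_pow_mul_ellipticKernel j)]
  refine setIntegral_congr_fun measurableSet_Ioo fun x hx ↦ ?_
  rw [← integral_pow_mul_ellipticKernel j hx, integral_zero_one_eq_setIntegral_Ioo]

lemma hasDerivAt_sqrt_one_sub_sq {x : ℝ} (hx : x ∈ Set.Ioo (0 : ℝ) 1) :
    HasDerivAt (fun x : ℝ ↦ √(1 - x ^ 2)) (-x / √(1 - x ^ 2)) x := by
  have hx2 : 0 < 1 - x ^ 2 := by nlinarith [hx.1, hx.2]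
  refine (((hasDerivAt_pow 2 x).const_sub 1).sqrt hx2.ne').congr_deriv ?_
  field_simp
  simp

lemma one_sub_sqrt_one_sub_le {s : ℝ} (hs0 : 0 ≤ s) (hs : s ≤ 1) : 1 - √(1 - s) ≤ s := by
  have : 1 - s ≤ √(1 - s) := Real.le_sqrt_of_sq_le (by nlinarith)
  linarith

open Filter Topology in
lemma integral_ellipticKParam : ∫ m in (0 : ℝ)..1, ellipticKParam m = 2 := by
  have h := integral_pow_mul_ellipticKParam 0
  simp only [pow_zero, one_mul] at h
  rw [h, intervalIntegral.integral_eq_sub_of_hasDerivAt_of_tendsto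
    (f := fun x : ℝ ↦ 2 * ((1 - √(1 - x ^ 2)) / x)) (fa := 0) (fb := 2) one_pos ?_
    (intervalIntegrable_incompleteMoment_div 0) ?_ ?_, sub_zero]
  · intro x hx
    have hx0 := hx.1
    have hx2 : 0 < 1 - x ^ 2 := by nlinarith [hx.1, hx.2]
    have hs := Real.sqrt_pos.mpr hx2
    have hsq := Real.sq_sqrt hx2.le
    refine ((((hasDerivAt_sqrt_one_sub_sq hx).const_sub 1).div (hasDerivAt_id x)
      hx0.ne').const_mul 2).congr_deriv ?_
    rw [incompleteMoment_zero (by linarith)]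
    simp only [id, mul_zero, zero_add]
    field_simp
    linear_combination hsq
  · have hlim : Tendsto (fun x : ℝ ↦ 2 * x) (𝓝[>] 0) (𝓝 0) := by
      have : Continuous fun x : ℝ ↦ 2 * x := by fun_prop
      simpa using (this.tendsto 0).mono_left nhdsWithin_le_nhds
    refine tendsto_of_tendsto_of_tendsto_of_le_of_le' tendsto_const_nhds hlim ?_ ?_
    · filter_upwards [self_mem_nhdsWithin] with x hx
      have : √(1 - x ^ 2) ≤ 1 := Real.sqrt_le_one.mpr (by nlinarith)
      exact mul_nonneg zero_le_two (div_nonneg (by linarith) (le_of_lt hx))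
    · filter_upwards [Ioo_mem_nhdsGT one_pos] with x hx
      gcongr
      rw [div_le_iff₀ hx.1, ← sq]
      exact one_sub_sqrt_one_sub_le (sq_nonneg x) (by nlinarith [hx.1, hx.2])
  · have : ContinuousAt (fun x : ℝ ↦ 2 * ((1 - √(1 - x ^ 2)) / x)) 1 := by
      fun_prop (disch := norm_num)
    simpa using this.tendsto.mono_left nhdsWithin_le_nhds

open Filter Topology in
/-- The moment recurrence for the complete elliptic integral of the first kind. -/
lemma integral_pow_succ_mul_ellipticKParam (j : ℕ) :
    (j + 1) ^ 2 * (∫ m in (0 : ℝ)..1, m ^ j * ellipticKParam m) -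
      (j + 3 / 2) ^ 2 * (∫ m in (0 : ℝ)..1, m ^ (j + 1) * ellipticKParam m) = -(1 / 2) := by
  have hj : (0 : ℝ) < j + 1 := by positivity
  have hpos {x : ℝ} (hx : x ∈ Set.Ioo (0 : ℝ) 1) : 0 < 1 - x ^ 2 := by nlinarith [hx.1, hx.2]
  rw [integral_pow_mul_ellipticKParam, integral_pow_mul_ellipticKParam,
    ← intervalIntegral.integral_const_mul, ← intervalIntegral.integral_const_mul,
    ← intervalIntegral.integral_sub ((intervalIntegrable_incompleteMoment_div j).const_mul _)
      ((intervalIntegrable_incompleteMoment_div (j + 1)).const_mul _),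
    intervalIntegral.integral_eq_sub_of_hasDerivAt_of_tendsto
    (f := fun x : ℝ ↦ (j + 1) / 2 * (√(1 - x ^ 2) * incompleteMoment j (x ^ 2) / x ^ (2 * j + 3))
      - 1 / (2 * x)) (fa := 0) (fb := -(1 / 2)) one_pos ?_
    (((intervalIntegrable_incompleteMoment_div j).const_mul _).sub
      ((intervalIntegrable_incompleteMoment_div (j + 1)).const_mul _)) ?_ ?_, sub_zero]
  · intro x hx
    have hx0 := hx.1
    have hs := Real.sqrt_pos.mpr (hpos hx)
    have hsq := Real.sq_sqrt (hpos hx).le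
    have hH : HasDerivAt (fun x : ℝ ↦ incompleteMoment j (x ^ 2))
        ((x ^ 2) ^ j / √(1 - x ^ 2) * (2 * x)) x := by
      refine ((hasDerivAt_incompleteMoment j (s := x ^ 2) (by linarith [hpos hx])).comp x
        (hasDerivAt_pow 2 x)).congr_deriv ?_
      simp
    have hinv : HasDerivAt (fun x : ℝ ↦ 1 / (2 * x)) (-1 / (2 * x ^ 2)) x := by
      refine ((((hasDerivAt_id x).const_mul 2).inv (by simpa using hx0.ne')).congr_deriv
        ?_).congr_of_eventuallyEq (.of_forall fun y ↦ by simp)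
      simp only [id]
      field_simp
    refine ((((((hasDerivAt_sqrt_one_sub_sq hx).mul hH).div (hasDerivAt_pow (2 * j + 3) x)
      (pow_ne_zero _ hx0.ne')).const_mul _)).sub hinv).congr_deriv ?_
    have hrec : incompleteMoment (j + 1) (x ^ 2) = ((j + 1) * incompleteMoment j (x ^ 2) -
        (x ^ 2) ^ (j + 1) * √(1 - x ^ 2)) / (j + 3 / 2) := by
      rw [eq_div_iff (by positivity), ← incompleteMoment_succ j (by linarith [hpos hx]), mul_comm]
    rw [hrec]
    simp only [Pi.mul_apply]
    generalize incompleteMoment j (x ^ 2) = H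
    rw [show 2 * j + 3 - 1 = 2 * j + 2 from rfl, show 2 * (j + 1) + 2 = 2 * j + 4 by ring,
      ← pow_mul x 2 j, ← pow_mul x 2 (j + 1), show 2 * (j + 1) = 2 * j + 2 by ring]
    simp only [pow_add x (2 * j)]
    have hP : x ^ (2 * j) ≠ 0 := pow_ne_zero _ hx0.ne'
    generalize x ^ (2 * j) = P at hP ⊢
    generalize √(1 - x ^ 2) = s at hs hsq ⊢
    push_cast
    field_simp
    linear_combination -((j : ℝ) + 1) * (j * 2 + 3) * H * hsq
  · have hlim : Tendsto (fun x : ℝ ↦ -(x / 2)) (𝓝[>] 0) (𝓝 0) := by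
      have : Continuous fun x : ℝ ↦ -(x / 2) := by fun_prop
      simpa using (this.tendsto 0).mono_left nhdsWithin_le_nhds
    refine tendsto_of_tendsto_of_tendsto_of_le_of_le' hlim tendsto_const_nhds ?_ ?_
    · filter_upwards [Ioo_mem_nhdsGT one_pos] with x hx
      have hx0 := hx.1
      have h1 := mul_le_mul_of_nonneg_left (pow_div_le_incompleteMoment j (sq_nonneg x)
        (by linarith [hpos hx])) (Real.sqrt_nonneg (1 - x ^ 2))
      have h2 := one_sub_sqrt_one_sub_le (sq_nonneg x) (by linarith [hpos hx])
      calc -(x / 2) ≤ (j + 1) / 2 * (√(1 - x ^ 2) * ((x ^ 2) ^ (j + 1) / (j + 1)) /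
            x ^ (2 * j + 3)) - 1 / (2 * x) := by
            have h3 : (1 - √(1 - x ^ 2)) / (2 * x) ≤ x / 2 := by
              rw [div_le_iff₀ (by positivity)]
              linarith
            refine (neg_le_neg h3).trans_eq ?_
            rw [← pow_mul, show 2 * j + 3 = 2 * (j + 1) + 1 by ring, pow_succ]
            field_simp
            ring
        _ ≤ _ := by gcongr
    · filter_upwards [Ioo_mem_nhdsGT one_pos] with x hx
      have hx0 := hx.1
      have h1 := sqrt_mul_incompleteMoment_le j (sq_nonneg x) (by linarith [hpos hx])
      calc _ ≤ (j + 1) / 2 * ((x ^ 2) ^ (j + 1) / (j + 1) / x ^ (2 * j + 3)) - 1 / (2 * x) := by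
            gcongr
        _ = 0 := by
            rw [← pow_mul, show 2 * j + 3 = 2 * (j + 1) + 1 by ring, pow_succ]
            field_simp
            norm_num
  · have hlow : Tendsto (fun x : ℝ ↦ -(1 / (2 * x))) (𝓝[<] 1) (𝓝 (-(1 / 2))) := by
      have : ContinuousAt (fun x : ℝ ↦ -(1 / (2 * x))) 1 := by fun_prop (disch := norm_num)
      simpa using this.tendsto.mono_left nhdsWithin_le_nhds
    have hhigh : Tendsto (fun x : ℝ ↦ (j + 1) / 2 * (√(1 - x ^ 2) * 2 / x ^ (2 * j + 3))
        - 1 / (2 * x)) (𝓝[<] 1) (𝓝 (-(1 / 2))) := by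
      have : ContinuousAt (fun x : ℝ ↦ ((j : ℝ) + 1) / 2 * (√(1 - x ^ 2) * 2 / x ^ (2 * j + 3))
          - 1 / (2 * x)) 1 := by fun_prop (disch := norm_num)
      simpa using this.tendsto.mono_left nhdsWithin_le_nhds
    refine tendsto_of_tendsto_of_tendsto_of_le_of_le' hlow hhigh ?_ ?_
    · filter_upwards [Ioo_mem_nhdsLT one_pos] with x hx
      have hx0 := hx.1
      have h0 := (div_nonneg (by positivity) hj.le).trans
        (pow_div_le_incompleteMoment j (sq_nonneg x) (by linarith [hpos hx]))
      have : 0 ≤ (j + 1 : ℝ) / 2 * (√(1 - x ^ 2) * incompleteMoment j (x ^ 2) /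
        x ^ (2 * j + 3)) := by positivity
      linarith
    · filter_upwards [Ioo_mem_nhdsLT one_pos] with x hx
      have hx0 := hx.1
      gcongr
      exact incompleteMoment_le_two j (sq_nonneg x) (by linarith [hpos hx])

open Polynomial

/-- Integration over `[0, 1]` against the complete elliptic integral of the first kind, as a linear
functional on real polynomials. -/
noncomputable def ellipticFunctional : ℝ[X] →ₗ[ℝ] ℝ where
  toFun p := ∫ m in (0 : ℝ)..1, ellipticKParam m * p.eval m
  map_add' p q := by
    simp only [eval_add, mul_add]
    exact intervalIntegral.integral_add
      (intervalIntegrable_ellipticKParam.mul_continuousOn p.continuous.continuousOn)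
      (intervalIntegrable_ellipticKParam.mul_continuousOn q.continuous.continuousOn)
  map_smul' c p := by
    simp only [eval_smul, smul_eq_mul, mul_left_comm _ c, intervalIntegral.integral_const_mul,
      RingHom.id_apply]

lemma ellipticFunctional_X_pow (j : ℕ) :
    ellipticFunctional (X ^ j) = ∫ m in (0 : ℝ)..1, m ^ j * ellipticKParam m := by
  simp [ellipticFunctional, mul_comm]

/-- The Legendre operator `p ↦ (X (1 - X) p')'`, under integration against the complete elliptic
integral, acts as multiplication by `1 / 4` up to a boundary term. -/
lemma ellipticFunctional_legendre_operator (p : ℝ[X]) :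
    ellipticFunctional (derivative (X * (1 - X) * derivative p)) =
      ellipticFunctional p / 4 - p.eval 1 / 2 := by
  induction p using Polynomial.induction_on' with
  | add p q hp hq =>
    rw [derivative_add, mul_add, derivative_add, map_add, hp, hq, map_add, eval_add]
    ring
  | monomial n a =>
    rw [← smul_X_eq_monomial, derivative_smul, mul_smul_comm, derivative_smul, map_smul, map_smul,
      eval_smul, eval_pow, eval_X, one_pow]
    obtain _ | j := n
    · have h := ellipticFunctional_X_pow 0
      simp only [pow_zero, one_mul, integral_ellipticKParam] at h
      simp [h]
      ring
    · have h : derivative (X * (1 - X) * derivative (X ^ (j + 1) : ℝ[X])) =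
          ((j + 1 : ℝ) ^ 2) • X ^ j - ((j + 1 : ℝ) * (j + 2)) • X ^ (j + 1) := by
        rw [show X * (1 - X) * derivative (X ^ (j + 1) : ℝ[X]) =
          C (j + 1 : ℝ) * (X ^ (j + 1) - X ^ (j + 2)) by simp; ring]
        simp only [derivative_mul, derivative_C, derivative_sub, derivative_X_pow, smul_eq_C_mul]
        simp
        ring
      rw [h, map_sub, map_smul, map_smul, ellipticFunctional_X_pow, ellipticFunctional_X_pow]
      have := integral_pow_succ_mul_ellipticKParam j
      simp only [smul_eq_mul]
      linear_combination a * this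

lemma integral_ellipticKParam_mul_realShiftedLegendre (n : ℕ) :
    ∫ m in (0 : ℝ)..1, ellipticKParam m * (realShiftedLegendre n).eval m =
      2 * (-1) ^ n / (2 * n + 1) ^ 2 := by
  have h := ellipticFunctional_legendre_operator (realShiftedLegendre n)
  rw [derivative_X_mul_one_sub_X_mul_derivative_realShiftedLegendre, ← smul_eq_C_mul, map_smul,
    eval_one_realShiftedLegendre, smul_eq_mul] at h
  change ellipticFunctional (realShiftedLegendre n) = _
  rw [eq_div_iff (by positivity)]
  linear_combination -4 * h

lemma hasSum_integral_ellipticKParam_sq :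
    HasSum (fun n : ℕ ↦ (4 : ℝ) / (2 * n + 1) ^ 3) (∫ m in (0 : ℝ)..1, ellipticKParam m ^ 2) := by
  refine (congrArg (HasSum · _) (funext fun n ↦ ?_)).mp
    (hasSum_sq_integral_mul_realShiftedLegendre memLp_ellipticKParam)
  rw [integral_ellipticKParam_mul_realShiftedLegendre, div_pow, mul_pow, ← pow_mul, mul_comm n 2,
    pow_mul]
  have : (2 * n + 1 : ℝ) ≠ 0 := by positivity
  field_simp
  norm_num

lemma image_sq_Ioo_zero_one : (fun k : ℝ ↦ k ^ 2) '' Set.Ioo 0 1 = Set.Ioo 0 1 := by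
  ext m
  constructor
  · rintro ⟨k, ⟨hk0, hk1⟩, rfl⟩
    exact ⟨pow_pos hk0 2, pow_lt_one₀ hk0.le hk1 two_ne_zero⟩
  · rintro ⟨hm0, hm1⟩
    exact ⟨√m, ⟨Real.sqrt_pos.mpr hm0, (Real.sqrt_lt' one_pos).mpr (by simpa using hm1)⟩,
      Real.sq_sqrt hm0.le⟩

lemma integral_mul_EllK_sq :
    ∫ k in (0 : ℝ)..1, k * EllK k ^ 2 = (∫ m in (0 : ℝ)..1, ellipticKParam m ^ 2) / 2 := by
  have h := integral_image_eq_integral_abs_deriv_smul (s := Set.Ioo (0 : ℝ) 1)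
    (f := fun k ↦ k ^ 2) (f' := fun k ↦ 2 * k) measurableSet_Ioo
    (fun k _ ↦ by simpa using (hasDerivAt_pow 2 k).hasDerivWithinAt)
    (fun x hx y hy hxy ↦ (sq_eq_sq₀ hx.1.le hy.1.le).mp hxy) (fun m ↦ ellipticKParam m ^ 2)
  rw [image_sq_Ioo_zero_one] at h
  rw [integral_zero_one_eq_setIntegral_Ioo, integral_zero_one_eq_setIntegral_Ioo, h,
    ← integral_div]
  refine setIntegral_congr_fun measurableSet_Ioo fun k hk ↦ ?_
  simp only [EllK_eq_ellipticKParam, smul_eq_mul, abs_of_pos (mul_pos two_pos hk.1)]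
  ring

end CompleteElliptic

/-- The sum of the reciprocals of the cubes of the odd numbers. -/
lemma hasSum_one_div_odd_cube :
    HasSum (fun n : ℕ ↦ (1 : ℂ) / (2 * n + 1) ^ 3) (7 / 8 * riemannZeta 3) := by
  have hs : Summable fun n : ℕ ↦ (1 : ℂ) / (n : ℂ) ^ 3 := by
    have := (Real.summable_one_div_nat_pow (p := 3)).mpr (by norm_num)
    simpa using Complex.ofRealCLM.summable this
  have hz : HasSum (fun n : ℕ ↦ (1 : ℂ) / (n : ℂ) ^ 3) (riemannZeta 3) := by
    have := zeta_nat_eq_tsum_of_gt_one (k := 3) (by norm_num)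
    push_cast at this
    exact this ▸ hs.hasSum
  have heven : HasSum (fun n : ℕ ↦ (1 : ℂ) / ((2 * n : ℕ) : ℂ) ^ 3) (1 / 8 * riemannZeta 3) := by
    refine (congrArg (HasSum · _) (funext fun n ↦ ?_)).mp (hz.mul_left (1 / 8))
    push_cast
    ring
  have hodd : Summable fun n : ℕ ↦ (1 : ℂ) / ((2 * n + 1 : ℕ) : ℂ) ^ 3 :=
    hs.comp_injective fun a b h ↦ by simpa using h
  have h := (heven.even_add_odd (f := fun n : ℕ ↦ (1 : ℂ) / (n : ℂ) ^ 3) hodd.hasSum).unique hz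
  have ht : ∑' n : ℕ, (1 : ℂ) / ((2 * n + 1 : ℕ) : ℂ) ^ 3 = 7 / 8 * riemannZeta 3 := by
    linear_combination h
  rw [← ht]
  simpa using hodd.hasSum

theorem stmt_8 :
    ((∫ k in (0:ℝ)..(1:ℝ), k * (EllK k)^2 : ℝ) : ℂ) = 7/4 * riemannZeta 3 := by
  have h : HasSum (fun n : ℕ ↦ (4 : ℂ) / (2 * n + 1) ^ 3)
      ((∫ m in (0 : ℝ)..1, ellipticKParam m ^ 2 : ℝ) : ℂ) := by
    simpa using Complex.ofRealCLM.hasSum hasSum_integral_ellipticKParam_sq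
  have h' : HasSum (fun n : ℕ ↦ (4 : ℂ) / (2 * n + 1) ^ 3) (4 * (7 / 8 * riemannZeta 3)) := by
    refine (congrArg (HasSum · _) (funext fun n ↦ ?_)).mp (hasSum_one_div_odd_cube.mul_left 4)
    rw [mul_one_div]
  rw [integral_mul_EllK_sq, Complex.ofReal_div, h.unique h']
  push_cast
  ring
end
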